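/- arXiv:2012.11927 — 5 statements merged into one kernel-verified Lean document; each statement's English description precedes it below -/
import Mathlib

section
/- Let k be a field, A a nonzero finite-dimensional k-algebra, and r a unit of the centre of A. Let φ_r be the k-algebra automorphism of the trivial extension algebra T(A) defined by φ_r(a, f) = (a, r·f) for (a,f) ∈ A ⊕ D(A). Then φ_r is an inner automorphism of T(A) (i.e., there exists a unit t of T(A) with φ_r(x) = t x t⁻¹ for all x ∈ T(A)) if and only if r = 1. -/
section DualBimodule

variable (k A : Type) [Field k] [Ring A] [Algebra k A]

/-- The left `A`-action on `D(A) = Hom_k(A, k)`, given by `(a • f) x = f (x * a)`. -/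
noncomputable instance Module.Dual.leftModule : Module A (Module.Dual k A) where
  smul a f := f ∘ₗ LinearMap.mulRight k a
  one_smul f := LinearMap.ext fun x => by show f (x * 1) = f x; rw [mul_one]
  mul_smul a b f := LinearMap.ext fun x => by
    show f (x * (a * b)) = f (x * a * b); rw [mul_assoc]
  smul_zero a := LinearMap.ext fun x => by show (0 : Module.Dual k A) (x * a) = 0; rfl
  smul_add a f g := LinearMap.ext fun x => by
    show (f + g) (x * a) = f (x * a) + g (x * a); rfl
  add_smul a b f := LinearMap.ext fun x => by
    show f (x * (a + b)) = f (x * a) + f (x * b); rw [mul_add, map_add]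
  zero_smul f := LinearMap.ext fun x => by show f (x * 0) = 0; rw [mul_zero, map_zero]

/-- The right `A`-action on `D(A) = Hom_k(A, k)`, given by `(f • op b) x = f (b * x)`. -/
noncomputable instance Module.Dual.rightModule : Module Aᵐᵒᵖ (Module.Dual k A) where
  smul b f := f ∘ₗ LinearMap.mulLeft k b.unop
  one_smul f := LinearMap.ext fun x => by show f (1 * x) = f x; rw [one_mul]
  mul_smul a b f := LinearMap.ext fun x => by
    show f ((a * b).unop * x) = f (b.unop * (a.unop * x))
    rw [MulOpposite.unop_mul, mul_assoc]
  smul_zero a := LinearMap.ext fun x => by show (0 : Module.Dual k A) (a.unop * x) = 0; rfl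
  smul_add a f g := LinearMap.ext fun x => by
    show (f + g) (a.unop * x) = f (a.unop * x) + g (a.unop * x); rfl
  add_smul a b f := LinearMap.ext fun x => by
    show f ((a + b).unop * x) = f (a.unop * x) + f (b.unop * x)
    rw [MulOpposite.unop_add, add_mul, map_add]
  zero_smul f := LinearMap.ext fun x => by
    show f ((0 : Aᵐᵒᵖ).unop * x) = 0
    rw [MulOpposite.unop_zero, zero_mul, map_zero]

instance : SMulCommClass A Aᵐᵒᵖ (Module.Dual k A) where
  smul_comm a b f := LinearMap.ext fun x => by
    show f (b.unop * (x * a)) = f (b.unop * x * a); rw [mul_assoc]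

instance : IsScalarTower k A (Module.Dual k A) where
  smul_assoc c a f := LinearMap.ext fun x => by
    show f (x * (c • a)) = c • f (x * a)
    rw [mul_smul_comm, map_smul]

instance : IsScalarTower k Aᵐᵒᵖ (Module.Dual k A) where
  smul_assoc c b f := LinearMap.ext fun x => by
    show f ((c • b).unop * x) = c • f (b.unop * x)
    rw [MulOpposite.unop_smul, smul_mul_assoc, map_smul]

/-- The trivial extension algebra `T(A) = A ⊕ D(A)`. -/
noncomputable abbrev TrivialExtension : Type := TrivSqZeroExt A (Module.Dual k A)


/-!
Comparing a twist with conjugation by a unit `t = (u, g)` on the elements `(0, f)` gives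
`(r • f) • u = u • f` for every `f ∈ D(A)`, because `g` only contributes products inside the
square-zero ideal `D(A)`. Evaluating at `1` yields `f (u * r) = f u`; functionals separate points,
so `u * r = u`, and `u` is a unit.
-/

section

open TrivSqZeroExt MulOpposite

theorem trivSqZeroExt_inr_eq_conj_inr_iff {R M : Type*} [Semiring R] [AddCommMonoid M]
    [Module R M] [Module Rᵐᵒᵖ M] [SMulCommClass R Rᵐᵒᵖ M] (t : (TrivSqZeroExt R M)ˣ) (m n : M) :
    inr n = t.val * inr m * t⁻¹.val ↔ op t.val.fst • n = t.val.fst • m := by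
  rw [Units.eq_mul_inv_iff_mul_eq]
  simp [TrivSqZeroExt.ext_iff]

variable {k A}

theorem dual_smul_apply (a : A) (f : Module.Dual k A) (x : A) : (a • f) x = f (x * a) :=
  rfl

theorem dual_op_smul_apply (a : A) (f : Module.Dual k A) (x : A) : (op a • f) x = f (a * x) :=
  rfl

theorem forall_dual_op_smul_smul_eq_smul_iff (a b c : A) :
    (∀ f : Module.Dual k A, op a • b • f = c • f) ↔ ∀ x, a * x * b = x * c := by
  simp only [LinearMap.ext_iff, dual_smul_apply, dual_op_smul_apply]
  rw [forall_comm]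
  refine forall_congr' fun x => ?_
  rw [← (Module.eval_apply_injective k).eq_iff, LinearMap.ext_iff]
  rfl

variable (k)

theorem trivialExtension_twist_inner_iff_general (r : A) :
    (∃ t : (TrivialExtension k A)ˣ, ∀ x : TrivialExtension k A,
        inl x.fst + inr (r • x.snd) = t.val * x * t⁻¹.val) ↔ r = 1 := by
  constructor
  · rintro ⟨t, ht⟩
    let u : A := t.val.fst
    have op_smul_smul_eq (f : Module.Dual k A) : op u • r • f = u • f :=
      (trivSqZeroExt_inr_eq_conj_inr_iff t f (r • f)).1 (by simpa using ht (inr f))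
    have mul_eq_self : u * r = u := by
      simpa using (forall_dual_op_smul_smul_eq_smul_iff u r u).1 op_smul_smul_eq 1
    have isUnit_u : IsUnit u := isUnit_iff_isUnit_fst.1 t.isUnit
    exact isUnit_u.mul_eq_left.1 mul_eq_self
  · rintro rfl
    exact ⟨1, fun x => by simp [inl_fst_add_inr_snd_eq]⟩

end

/-- Let `A` be a nonzero finite-dimensional `k`-algebra and `r` a unit of the
centre of `A`. The `k`-algebra automorphism `φ_r` of `T(A)` given by `φ_r (a, f) = (a, r • f)`
is inner if and only if `r = 1`. -/
theorem trivialExtension_twist_inner_iff (r : A) (hr : r ∈ Subring.center A) (hru : IsUnit r)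
    [Nontrivial A] [FiniteDimensional k A] :
    (∃ t : (TrivialExtension k A)ˣ, ∀ x : TrivialExtension k A,
        TrivSqZeroExt.inl (TrivSqZeroExt.fst x) + TrivSqZeroExt.inr (r • TrivSqZeroExt.snd x)
          = (t : TrivialExtension k A) * x * ((t⁻¹ : (TrivialExtension k A)ˣ) : TrivialExtension k A)) ↔
      r = 1 :=
  trivialExtension_twist_inner_iff_general k r

end DualBimodule
end

section
/- Let A be a finite-dimensional algebra over a field k and let φ, ψ be k-algebra automorphisms of A. Then the restriction functors φ^* and ψ^* on the category of A-modules are naturally isomorphic if and only if there exists a unit u of A such that φ(a) = u⁻¹ ψ(a) u for all a ∈ A (i.e., φ and ψ differ by an inner automorphism). -/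
open CategoryTheory

/-!
Let `f, g : R →+* S`. Since every element `m` of an `S`-module `M` is the image of `1` under the
linear map `x ↦ x • m`, a natural transformation `f^* ⟶ g^*` is determined by the image `s` of `1`
in the regular module: it acts on every `M` as multiplication by `s`, and linearity over `R`
means `s * f r = g r * s`. Composition corresponds to multiplication of these scalars, hence
isomorphisms correspond to units.
-/

universe v u₁ u₂

theorem semiconjBy_units_iff_eq_inv_mul_mul {M : Type*} [Monoid M] (u : Mˣ) (x y : M) :
    SemiconjBy (u : M) x y ↔ x = (u⁻¹ : Mˣ) * y * u := by
  rw [mul_assoc, Units.eq_inv_mul_iff_mul_eq, SemiconjBy]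

section

variable {R : Type u₁} {S : Type u₂} [Ring R] [Ring S] {f g h : R →+* S}

/-- The natural transformation `f^* ⟶ g^*` given on every module by multiplication by an element `s`
that intertwines `f` and `g`. -/
noncomputable def smulNatTrans (s : S) (hs : ∀ r, SemiconjBy s (f r) (g r)) :
    ModuleCat.restrictScalars.{v} f ⟶ ModuleCat.restrictScalars.{v} g where
  app M := ModuleCat.semilinearMapAddEquiv g ((ModuleCat.restrictScalars f).obj M) M
    { toFun := fun m : M ↦ s • m
      map_add' := fun m n : M ↦ smul_add s m n
      map_smul' := fun r (m : M) ↦ show s • f r • m = g r • s • m by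
        rw [smul_smul, smul_smul, (hs r).eq] }
  naturality M N l := by
    ext m
    exact (l.hom.map_smul s m).symm

theorem smulNatTrans_comp_eq_id {s t : S} (hs : ∀ r, SemiconjBy s (f r) (g r))
    (ht : ∀ r, SemiconjBy t (g r) (f r)) (hts : t * s = 1) :
    smulNatTrans.{v} s hs ≫ smulNatTrans t ht = 𝟙 _ := by
  ext M m
  change t • s • (show M from m) = m
  rw [smul_smul, hts, one_smul]

/-- The natural isomorphism `f^* ≅ g^*` given on every module by multiplication by a unit `u` that
intertwines `f` and `g`. -/
noncomputable def smulNatIso (u : Sˣ) (hu : ∀ r, SemiconjBy (u : S) (f r) (g r)) :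
    ModuleCat.restrictScalars.{v} f ≅ ModuleCat.restrictScalars.{v} g where
  hom := smulNatTrans u hu
  inv := smulNatTrans (u⁻¹ : Sˣ) fun r ↦ (hu r).units_inv_symm_left
  hom_inv_id := smulNatTrans_comp_eq_id _ _ u.inv_mul
  inv_hom_id := smulNatTrans_comp_eq_id _ _ u.mul_inv

/-- The scalar by which a natural transformation `f^* ⟶ g^*` acts, read off as the image of `1` in
the regular module. The regular module is lifted to the universe of the modules considered. -/
noncomputable def natTransScalar
    (η : ModuleCat.restrictScalars.{max u₂ v} f ⟶ ModuleCat.restrictScalars.{max u₂ v} g) : S :=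
  ULift.down (η.app (ModuleCat.of S (ULift.{v} S)) (ULift.up (1 : S)))

theorem natTrans_app_apply_eq_smul
    (η : ModuleCat.restrictScalars.{max u₂ v} f ⟶ ModuleCat.restrictScalars.{max u₂ v} g)
    (M : ModuleCat.{max u₂ v} S) (m : M) :
    (η.app M m : M) = natTransScalar.{v} η • m := by
  let evalAt : ModuleCat.of S (ULift.{v} S) ⟶ M :=
    ModuleCat.ofHom (LinearMap.toSpanSingleton S M m ∘ₗ ULift.moduleEquiv.toLinearMap)
  have naturality_at_one : (η.app M ((1 : S) • m) : M) = natTransScalar.{v} η • m :=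
    ConcreteCategory.congr_hom (η.naturality evalAt) (ULift.up (1 : S))
  rwa [one_smul] at naturality_at_one

theorem semiconjBy_natTransScalar
    (η : ModuleCat.restrictScalars.{max u₂ v} f ⟶ ModuleCat.restrictScalars.{max u₂ v} g) (r : R) :
    SemiconjBy (natTransScalar.{v} η) (f r) (g r) := by
  let regular := ModuleCat.of S (ULift.{v} S)
  let one : regular := ULift.up (1 : S)
  have linearity_at_one : (η.app regular (f r • one) : regular) = g r • η.app regular one :=
    (η.app regular).hom.map_smul r one
  rw [natTrans_app_apply_eq_smul, natTrans_app_apply_eq_smul] at linearity_at_one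
  have intertwining : natTransScalar.{v} η * (f r * 1) = g r * (natTransScalar.{v} η * 1) :=
    congrArg ULift.down linearity_at_one
  rwa [mul_one, mul_one] at intertwining

theorem natTransScalar_id :
    natTransScalar.{v} (𝟙 (ModuleCat.restrictScalars.{max u₂ v} f)) = 1 :=
  rfl

theorem natTransScalar_comp
    (η : ModuleCat.restrictScalars.{max u₂ v} f ⟶ ModuleCat.restrictScalars.{max u₂ v} g)
    (θ : ModuleCat.restrictScalars.{max u₂ v} g ⟶ ModuleCat.restrictScalars.{max u₂ v} h) :
    natTransScalar.{v} (η ≫ θ) = natTransScalar.{v} θ * natTransScalar.{v} η :=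
  congrArg ULift.down (natTrans_app_apply_eq_smul θ (ModuleCat.of S (ULift.{v} S)) _)

/-- The unit by which a natural isomorphism `f^* ≅ g^*` acts. -/
noncomputable def natIsoUnit
    (e : ModuleCat.restrictScalars.{max u₂ v} f ≅ ModuleCat.restrictScalars.{max u₂ v} g) : Sˣ where
  val := natTransScalar.{v} e.hom
  inv := natTransScalar.{v} e.inv
  val_inv := by rw [← natTransScalar_comp, e.inv_hom_id, natTransScalar_id]
  inv_val := by rw [← natTransScalar_comp, e.hom_inv_id, natTransScalar_id]

theorem restrictScalars_iso_iff_inner_general (f g : R →+* S) :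
    Nonempty (ModuleCat.restrictScalars.{max u₂ v} f ≅ ModuleCat.restrictScalars.{max u₂ v} g) ↔
      ∃ u : Sˣ, ∀ r : R, f r = ((u⁻¹ : Sˣ) : S) * g r * (u : S) := by
  simp only [← semiconjBy_units_iff_eq_inv_mul_mul]
  constructor
  · rintro ⟨e⟩
    exact ⟨natIsoUnit.{v} e, semiconjBy_natTransScalar.{v} e.hom⟩
  · rintro ⟨u, hu⟩
    exact ⟨smulNatIso u hu⟩

end

/-- For `k`-algebra automorphisms `φ, ψ` of a finite-dimensional `k`-algebra
`A`, the restriction functors `φ^*` and `ψ^*` on the category of `A`-modules are naturally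
isomorphic if and only if `φ` and `ψ` differ by an inner automorphism. -/
theorem restrictScalars_iso_iff_inner (k A : Type) [Field k] [Ring A] [Algebra k A]
    [FiniteDimensional k A] (φ ψ : A ≃ₐ[k] A) :
    Nonempty (ModuleCat.restrictScalars (φ : A →+* A) ≅ ModuleCat.restrictScalars (ψ : A →+* A)) ↔
      ∃ u : Aˣ, ∀ a : A, φ a = ((u⁻¹ : Aˣ) : A) * ψ a * (u : A) :=
  restrictScalars_iso_iff_inner_general (φ : A →+* A) (ψ : A →+* A)
end

section
/- Let A and B be finite-dimensional algebras over a field k. The product algebra A × B is periodic if and only if both A and B are periodic. -/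
open TensorProduct

/-- There is an exact sequence `0 → M → P_n → ⋯ → P_1 → N → 0` of `R`-modules
(so with `n` middle terms) in which each middle term `P_i` is projective. -/
def HasProjExactSeq (R : Type) [Ring R] (M N : ModuleCat R) (n : ℕ) : Prop :=
  ∃ (P : ℕ → ModuleCat R) (d : ∀ i, P (i + 1) →ₗ[R] P i)
    (_ : (P 0 : Type) ≃ₗ[R] N) (_ : (M : Type) ≃ₗ[R] P (n + 1)),
    (∀ i, 1 ≤ i → i ≤ n → Module.Projective R (P i)) ∧
    Function.Surjective (d 0) ∧ Function.Injective (d n) ∧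
    ∀ i < n, LinearMap.range (d (i + 1)) = LinearMap.ker (d i)

/-- The regular bimodule `B` as a module over the enveloping algebra `B ⊗[k] Bᵐᵒᵖ`. -/
noncomputable def regularBimodule (k B : Type) [Field k] [Ring B] [Algebra k B] :
    ModuleCat (B ⊗[k] Bᵐᵒᵖ) :=
  letI : Module (B ⊗[k] Bᵐᵒᵖ) B := TensorProduct.Algebra.module
  ModuleCat.of _ B

/-- A finite-dimensional `k`-algebra `B` is periodic if there are `n ≥ 1` and an exact
sequence `0 → B → P_{n-1} → ⋯ → P_0 → B → 0` of `B`-`B`-bimodules (modules over the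
enveloping algebra `B ⊗[k] Bᵐᵒᵖ`) with all `P_i` projective. -/
noncomputable def IsPeriodicAlgebra (k B : Type) [Field k] [Ring B] [Algebra k B] : Prop :=
  ∃ n : ℕ, 1 ≤ n ∧ HasProjExactSeq (B ⊗[k] Bᵐᵒᵖ) (regularBimodule k B) (regularBimodule k B) n

open CategoryTheory Limits

/-!
If `n` and `m` are periods of `A` and `B`, splicing bimodule resolutions with themselves makes
`n * m` a common period, and the product of the two spliced sequences, read over the enveloping
algebra of `A × B`, is a sequence for `A × B`.

Conversely, the enveloping algebra `S` of `A` is a direct factor of the enveloping algebra `R` of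
`A × B`: the projection `R → S` has a section that is a map of `R`-bimodules. For such a direct
factor, `Hom_R(S, -)` is not only right but also left adjoint to restriction of scalars. Hence both
functors are exact and preserve projective modules, and `Hom_R(S, A × B) ≅ A`.
-/

section ProjExactSeq

variable {R S : Type} [Ring R] [Ring S]

theorem hasProjExactSeq_zero_iff {M N : ModuleCat.{0} R} :
    HasProjExactSeq R M N 0 ↔ Nonempty (M ≃ₗ[R] N) := by
  constructor
  · rintro ⟨P, d, eN, eM, -, hsurj, hinj, -⟩
    exact ⟨eM.trans ((LinearEquiv.ofBijective (d 0) ⟨hinj, hsurj⟩).trans eN)⟩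
  · rintro ⟨e⟩
    exact ⟨fun | 0 => N | _ + 1 => M, fun | 0 => e.toLinearMap | _ + 1 => LinearMap.id,
      LinearEquiv.refl R N, LinearEquiv.refl R M, fun i _ _ => by omega, e.surjective,
      e.injective, fun i _ => by omega⟩

namespace HasProjExactSeq

theorem congr {M M' N N' : ModuleCat.{0} R} {n : ℕ} (h : HasProjExactSeq R M N n)
    (eM : M ≃ₗ[R] M') (eN : N ≃ₗ[R] N') : HasProjExactSeq R M' N' n := by
  obtain ⟨P, d, e₀, e₁, h⟩ := h
  exact ⟨P, d, e₀.trans eN, eM.symm.trans e₁, h⟩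

theorem prod {M M' N N' : ModuleCat.{0} R} {n : ℕ} (h : HasProjExactSeq R M N n)
    (h' : HasProjExactSeq R M' N' n) :
    HasProjExactSeq R (ModuleCat.of R (M × M')) (ModuleCat.of R (N × N')) n := by
  obtain ⟨P, d, eN, eM, hproj, hsurj, hinj, hexact⟩ := h
  obtain ⟨P', d', eN', eM', hproj', hsurj', hinj', hexact'⟩ := h'
  refine ⟨fun i => ModuleCat.of R (P i × P' i), fun i => (d i).prodMap (d' i),
    eN.prodCongr eN', eM.prodCongr eM', fun i h₁ hn => ?_, hsurj.prodMap hsurj',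
    hinj.prodMap hinj', fun i hi => ?_⟩
  · have := hproj i h₁ hn
    have := hproj' i h₁ hn
    exact inferInstanceAs (Module.Projective R (P i × P' i))
  · rw [LinearMap.range_prodMap, LinearMap.ker_prodMap, hexact i hi, hexact' i hi]

theorem map (F : ModuleCat.{0} R ⥤ ModuleCat.{0} S) [PreservesFiniteLimits F]
    [PreservesFiniteColimits F] [F.PreservesProjectiveObjects] {M N : ModuleCat.{0} R} {n : ℕ}
    (h : HasProjExactSeq R M N n) : HasProjExactSeq S (F.obj M) (F.obj N) n := by
  obtain ⟨P, d, eN, eM, hproj, hsurj, hinj, hexact⟩ := h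
  refine ⟨fun i => F.obj (P i), fun i => (F.map (ModuleCat.ofHom (d i))).hom,
    (F.mapIso eN.toModuleIso).toLinearEquiv, (F.mapIso eM.toModuleIso).toLinearEquiv,
    fun i h₁ hn => ?_, ?_, ?_, fun i hi => ?_⟩
  · have := hproj i h₁ hn
    have := (P i).projective_of_module_projective
    exact (IsProjective.iff_projective _).2 (F.projective_obj (P i))
  · have := (ModuleCat.epi_iff_surjective (ModuleCat.ofHom (d 0))).2 hsurj
    exact (ModuleCat.epi_iff_surjective _).1 inferInstance
  · have := (ModuleCat.mono_iff_injective (ModuleCat.ofHom (d n))).2 hinj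
    exact (ModuleCat.mono_iff_injective _).1 inferInstance
  · have := ShortComplex.Exact.moduleCat_of_range_eq_ker (ModuleCat.ofHom (d (i + 1)))
      (ModuleCat.ofHom (d i)) (hexact i hi)
    exact (this.map F).moduleCat_range_eq_ker

theorem map_of_adjunctions {F : ModuleCat.{0} R ⥤ ModuleCat.{0} S}
    {G : ModuleCat.{0} S ⥤ ModuleCat.{0} R} (adj : F ⊣ G) (adj' : G ⊣ F)
    {M N : ModuleCat.{0} R} {n : ℕ} (h : HasProjExactSeq R M N n) :
    HasProjExactSeq S (F.obj M) (F.obj N) n := by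
  have := adj.leftAdjoint_preservesColimits
  have := adj'.rightAdjoint_preservesLimits
  have := adj'.leftAdjoint_preservesColimits
  have := Functor.preservesProjectiveObjects_of_adjunction_of_preservesEpimorphisms adj
  exact h.map F

theorem cons {M K P N : ModuleCat.{0} R} {n : ℕ} [Module.Projective R P] {f : K →ₗ[R] P}
    {g : P →ₗ[R] N} (hf : Function.Injective f) (hfg : Function.Exact f g)
    (hg : Function.Surjective g) (h : HasProjExactSeq R M K n) :
    HasProjExactSeq R M N (n + 1) := by
  obtain ⟨Q, d, eK, eM, hproj, hsurj, hinj, hexact⟩ := h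
  let glue : Q 1 →ₗ[R] P := f ∘ₗ eK.toLinearMap ∘ₗ d 0
  have range_glue : LinearMap.range glue = LinearMap.ker g := by
    have onto_K : Function.Surjective (eK.toLinearMap ∘ₗ d 0) := eK.surjective.comp hsurj
    rw [LinearMap.range_comp_of_range_eq_top f (LinearMap.range_eq_top.2 onto_K),
      hfg.linearMap_ker_eq]
  have ker_glue : LinearMap.ker glue = LinearMap.ker (d 0) := by
    rw [LinearMap.ker_comp_of_ker_eq_bot _ (LinearMap.ker_eq_bot.2 hf), LinearEquiv.ker_comp]
  refine ⟨fun | 0 => N | 1 => P | i + 2 => Q (i + 1),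
    fun | 0 => g | 1 => glue | i + 2 => d (i + 1), LinearEquiv.refl R N, eM, ?_, hg, ?_, ?_⟩
  · rintro (_ | _ | i) h₁ hn
    · omega
    · assumption
    · exact hproj (i + 1) (by omega) (by omega)
  · cases n with
    | zero => exact hf.comp (eK.injective.comp hinj)
    | succ n => exact hinj
  · rintro (_ | _ | i) hi
    · exact range_glue
    · exact (hexact 0 (by omega)).trans ker_glue.symm
    · exact hexact (i + 1) (by omega)

theorem exists_cons {M N : ModuleCat.{0} R} {n : ℕ} (h : HasProjExactSeq R M N (n + 1)) :
    ∃ (K P : ModuleCat.{0} R) (f : K →ₗ[R] P) (g : P →ₗ[R] N), Module.Projective R P ∧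
      Function.Injective f ∧ Function.Exact f g ∧ Function.Surjective g ∧
      HasProjExactSeq R M K n := by
  obtain ⟨P, d, eN, eM, hproj, hsurj, hinj, hexact⟩ := h
  let K := ModuleCat.of R (LinearMap.ker (d 0))
  let toKer : P 2 →ₗ[R] K := (d 1).codRestrict _ fun x => hexact 0 (by omega) ▸ ⟨x, rfl⟩
  have surjective_toKer : Function.Surjective toKer := by
    rintro ⟨x, hx⟩
    obtain ⟨y, rfl⟩ := (hexact 0 (by omega)).symm ▸ hx
    exact ⟨y, rfl⟩
  refine ⟨K, P 1, (LinearMap.ker (d 0)).subtype, eN.toLinearMap ∘ₗ d 0, hproj 1 le_rfl (by omega),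
    Subtype.val_injective, fun x => by simp [K], eN.surjective.comp hsurj,
    fun | 0 => K | i + 1 => P (i + 2), fun | 0 => toKer | i + 1 => d (i + 2),
    LinearEquiv.refl R K, eM, ?_, surjective_toKer, ?_, ?_⟩
  · rintro (_ | i) h₁ hn
    · omega
    · exact hproj (i + 2) (by omega) (by omega)
  · cases n with
    | zero => exact fun x y hxy => hinj (congrArg Subtype.val hxy)
    | succ n => exact hinj
  · rintro (_ | i) hi
    · exact (hexact 1 (by omega)).trans (LinearMap.ker_codRestrict _ _ _).symm
    · exact hexact (i + 2) (by omega)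

theorem trans {L M N : ModuleCat.{0} R} {m n : ℕ} (h : HasProjExactSeq R L M m)
    (h' : HasProjExactSeq R M N n) : HasProjExactSeq R L N (m + n) := by
  induction n generalizing N with
  | zero =>
    obtain ⟨e⟩ := hasProjExactSeq_zero_iff.1 h'
    exact h.congr (LinearEquiv.refl R L) e
  | succ n ih =>
    obtain ⟨K, P, f, g, _, hf, hfg, hg, hK⟩ := h'.exists_cons
    exact (ih hK).cons hf hfg hg

theorem mul {M : ModuleCat.{0} R} {n : ℕ} (h : HasProjExactSeq R M M n) (m : ℕ) :
    HasProjExactSeq R M M (n * m) := by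
  induction m with
  | zero => exact hasProjExactSeq_zero_iff.2 ⟨LinearEquiv.refl R M⟩
  | succ m ih => exact ih.trans h

end HasProjExactSeq

end ProjExactSeq

/-- `i` is a section of the algebra homomorphism `p : R → S` that is linear for the left and right
actions of `R` on `S` through `p`. Such a section identifies `S` with the ideal of `R` generated by
the central idempotent `i 1`, so it exhibits `S` as a direct factor of the algebra `R`. -/
structure IsBimoduleSection {k R S : Type*} [CommSemiring k] [Semiring R] [Algebra k R]
    [Semiring S] [Algebra k S] (p : R →ₐ[k] S) (i : S →ₗ[k] R) : Prop where
  apply_apply : ∀ s, p (i s) = s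
  map_mul_left : ∀ r s, i (p r * s) = r * i s
  map_mul_right : ∀ s r, i (s * p r) = i s * r

namespace IsBimoduleSection

section Constructions

variable {k R R' S S' : Type*} [CommSemiring k] [Semiring R] [Algebra k R] [Semiring R']
  [Algebra k R'] [Semiring S] [Algebra k S] [Semiring S'] [Algebra k S']

theorem fst_inl : IsBimoduleSection (AlgHom.fst k R S) (LinearMap.inl k R S) where
  apply_apply _ := rfl
  map_mul_left _ _ := by ext <;> simp
  map_mul_right _ _ := by ext <;> simp

theorem snd_inr : IsBimoduleSection (AlgHom.snd k R S) (LinearMap.inr k R S) where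
  apply_apply _ := rfl
  map_mul_left _ _ := by ext <;> simp
  map_mul_right _ _ := by ext <;> simp

variable {p : R →ₐ[k] S} {i : S →ₗ[k] R} {p' : R' →ₐ[k] S'} {i' : S' →ₗ[k] R'}

theorem op (h : IsBimoduleSection p i) : IsBimoduleSection (AlgHom.op p)
    ((MulOpposite.opLinearEquiv k).toLinearMap ∘ₗ i ∘ₗ
      (MulOpposite.opLinearEquiv k).symm.toLinearMap) where
  apply_apply s := congrArg MulOpposite.op (h.apply_apply s.unop)
  map_mul_left r s := congrArg MulOpposite.op (h.map_mul_right s.unop r.unop)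
  map_mul_right s r := congrArg MulOpposite.op (h.map_mul_left r.unop s.unop)

theorem tensorProduct (h : IsBimoduleSection p i) (h' : IsBimoduleSection p' i') :
    IsBimoduleSection (Algebra.TensorProduct.map p p') (TensorProduct.map i i') where
  apply_apply s := by
    induction s with
    | zero => simp
    | add x y hx hy => simp only [map_add, hx, hy]
    | tmul s s' => simp [h.apply_apply, h'.apply_apply]
  map_mul_left r s := by
    induction r with
    | zero => simp
    | add x y hx hy => simp only [map_add, add_mul, hx, hy]
    | tmul r r' =>
      induction s with
      | zero => simp
      | add x y hx hy => simp only [map_add, mul_add, hx, hy]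
      | tmul s s' => simp [h.map_mul_left, h'.map_mul_left]
  map_mul_right s r := by
    induction r with
    | zero => simp
    | add x y hx hy => simp only [map_add, mul_add, hx, hy]
    | tmul r r' =>
      induction s with
      | zero => simp
      | add x y hx hy => simp only [map_add, add_mul, hx, hy]
      | tmul s s' => simp [h.map_mul_right, h'.map_mul_right]

end Constructions

section ChangeOfRings

open ModuleCat

universe u

variable {k : Type*} {R S : Type u} [CommSemiring k] [Ring R] [Algebra k R] [Ring S] [Algebra k S]
  {p : R →ₐ[k] S} {i : S →ₗ[k] R}

theorem coextendScalars_apply (h : IsBimoduleSection p i) {M : ModuleCat.{u} R}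
    (g : (coextendScalars p.toRingHom).obj M) (s : S) : g s = i s • g (1 : S) := by
  have hs : p (i s) * 1 = s := (mul_one _).trans (h.apply_apply s)
  exact (congrArg g hs.symm).trans
    ((CoextendScalars.equiv p.toRingHom M g).map_smul (i s) (1 : S))

/-- The map `M → Hom_R(S, M)` sending `x` to `s ↦ i s • x`, the unit of
`coextendRestrictScalarsAdj`. -/
noncomputable def toCoextendScalars (h : IsBimoduleSection p i) (M : ModuleCat.{u} R) :
    M →ₗ[R] (restrictScalars p.toRingHom).obj ((coextendScalars p.toRingHom).obj M) where
  toFun x := (CoextendScalars.equiv p.toRingHom M).symm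
    { toFun := fun s : S => i s • x
      map_add' := fun s t : S => (congrArg (· • x) (map_add i s t)).trans (add_smul _ _ x)
      map_smul' := fun r (s : S) =>
        (congrArg (· • x) (h.map_mul_left r s)).trans (mul_smul r (i s) x) }
  map_add' x y := CoextendScalars.ext <| LinearMap.ext fun s : S => smul_add (i s) x y
  map_smul' r x := CoextendScalars.ext <| LinearMap.ext fun s : S =>
    (mul_smul (i s) r x).symm.trans (congrArg (· • x) (h.map_mul_right s r).symm)

/-- Evaluation at `1` as an `S`-linear map `Hom_R(S, N) → N` for an `S`-module `N`, the counit of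
`coextendRestrictScalarsAdj`. -/
noncomputable def evalOne (h : IsBimoduleSection p i) (N : ModuleCat.{u} S) :
    (coextendScalars p.toRingHom).obj ((restrictScalars p.toRingHom).obj N) →ₗ[S] N where
  toFun g := g (1 : S)
  map_add' _ _ := rfl
  map_smul' s g := by
    rw [CoextendScalars.smul_apply, one_mul, h.coextendScalars_apply g s]
    exact congrArg (· • (show N from g (1 : S))) (h.apply_apply s)

/-- For a direct factor `S` of `R`, coextension of scalars is left adjoint to restriction of
scalars; for an arbitrary ring homomorphism it is only right adjoint to it. -/
noncomputable def coextendRestrictScalarsAdj (h : IsBimoduleSection p i) :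
    coextendScalars.{u, u, u} p.toRingHom ⊣ restrictScalars.{u, u, u} p.toRingHom :=
  Adjunction.mkOfUnitCounit
    { unit.app M := ofHom (Y := (restrictScalars p.toRingHom).obj _) (h.toCoextendScalars M)
      unit.naturality M M' f := by
        ext x
        exact CoextendScalars.ext <| LinearMap.ext fun s : S => (f.hom.map_smul (i s) x).symm
      counit.app N := ofHom (h.evalOne N)
      counit.naturality _ _ _ := rfl
      left_triangle := by
        ext M g
        exact CoextendScalars.ext <| LinearMap.ext fun s : S => (h.coextendScalars_apply g s).symm
      right_triangle := by
        ext N x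
        change p (i 1) • (show N from x) = x
        rw [h.apply_apply, one_smul] }

theorem bijective_homEquiv_symm (h : IsBimoduleSection p i) {M : ModuleCat.{u} R}
    {N : ModuleCat.{u} S} {f : M ⟶ (restrictScalars p.toRingHom).obj N}
    (hsurj : Function.Surjective f) (hker : ∀ x, f x = 0 → i 1 • x = 0) :
    Function.Bijective ((h.coextendRestrictScalarsAdj.homEquiv M N).symm f) := by
  set f' := (h.coextendRestrictScalarsAdj.homEquiv M N).symm f
  have f'_apply (g : (coextendScalars p.toRingHom).obj M) : f' g = f (g (1 : S)) := rfl
  constructor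
  · refine (injective_iff_map_eq_zero f'.hom).2 fun g hg => ?_
    have apply_one : g (1 : S) = 0 :=
      (h.coextendScalars_apply g 1).trans (hker _ ((f'_apply g).symm.trans hg))
    refine CoextendScalars.ext <| LinearMap.ext fun s : S => ?_
    exact (h.coextendScalars_apply g s).trans (apply_one ▸ smul_zero _)
  · intro y
    obtain ⟨x, rfl⟩ := hsurj y
    refine ⟨h.toCoextendScalars M x, (f'_apply _).trans ((map_smul f.hom (i 1) x).trans ?_)⟩
    change p (i 1) • (show N from f x) = f x
    rw [h.apply_apply, one_smul]

end ChangeOfRings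

section ProjExactSeq

open ModuleCat

variable {k : Type*} {R S : Type} [CommSemiring k] [Ring R] [Algebra k R] [Ring S] [Algebra k S]
  {p : R →ₐ[k] S} {i : S →ₗ[k] R} {n : ℕ}

theorem hasProjExactSeq_restrictScalars (h : IsBimoduleSection p i) {M N : ModuleCat.{0} S}
    (hMN : HasProjExactSeq S M N n) :
    HasProjExactSeq R ((restrictScalars p.toRingHom).obj M)
      ((restrictScalars p.toRingHom).obj N) n :=
  hMN.map_of_adjunctions (restrictCoextendScalarsAdj.{0} p.toRingHom) h.coextendRestrictScalarsAdj

theorem hasProjExactSeq_coextendScalars (h : IsBimoduleSection p i) {M N : ModuleCat.{0} R}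
    (hMN : HasProjExactSeq R M N n) :
    HasProjExactSeq S ((coextendScalars p.toRingHom).obj M)
      ((coextendScalars p.toRingHom).obj N) n :=
  hMN.map_of_adjunctions h.coextendRestrictScalarsAdj (restrictCoextendScalarsAdj.{0} p.toRingHom)

end ProjExactSeq

end IsBimoduleSection

section EnvelopingAlgebra

attribute [local instance] TensorProduct.Algebra.module

variable {k A C : Type*} [CommSemiring k] [Semiring A] [Algebra k A] [Semiring C] [Algebra k C]

/-- The homomorphism of enveloping algebras induced by an algebra homomorphism. -/
noncomputable abbrev envelopingMap (p : C →ₐ[k] A) : C ⊗[k] Cᵐᵒᵖ →ₐ[k] A ⊗[k] Aᵐᵒᵖ :=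
  Algebra.TensorProduct.map p (AlgHom.op p)

theorem tmul_smul_eq_mul_mul_unop (a x : A) (b : Aᵐᵒᵖ) : (a ⊗ₜ[k] b) • x = a * x * b.unop := by
  rw [TensorProduct.Algebra.smul_def, MulOpposite.smul_eq_mul_unop, smul_eq_mul, mul_assoc]

theorem map_smul_envelopingMap (p : C →ₐ[k] A) (r : C ⊗[k] Cᵐᵒᵖ) (x : C) :
    p (r • x) = envelopingMap p r • p x := by
  induction r with
  | zero => rw [map_zero, zero_smul (C ⊗[k] Cᵐᵒᵖ) x, zero_smul (A ⊗[k] Aᵐᵒᵖ) (p x), map_zero]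
  | add r s hr hs => simp only [add_smul, map_add, hr, hs]
  | tmul a b => simp [tmul_smul_eq_mul_mul_unop]

end EnvelopingAlgebra

section RegularBimodule

attribute [local instance] TensorProduct.Algebra.module

open ModuleCat

variable {k A B C : Type} [Field k] [Ring A] [Algebra k A] [Ring B] [Algebra k B] [Ring C]
  [Algebra k C]

/-- An algebra homomorphism as a map of regular bimodules, linear over the enveloping algebra of
its source. -/
noncomputable def regularBimoduleMap (p : C →ₐ[k] A) :
    regularBimodule k C ⟶ (restrictScalars (envelopingMap p).toRingHom).obj (regularBimodule k A) :=
  ofHom (X := C) (Y := (restrictScalars (envelopingMap p).toRingHom).obj (regularBimodule k A))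
    { toFun := p
      map_add' := map_add p
      map_smul' := map_smul_envelopingMap p }

/-- The decomposition of the regular bimodule of `A × B` into those of `A` and `B`. -/
noncomputable def regularBimoduleProdEquiv : regularBimodule k (A × B) ≃ₗ[(A × B) ⊗[k] (A × B)ᵐᵒᵖ]
    (restrictScalars (envelopingMap (AlgHom.fst k A B)).toRingHom).obj (regularBimodule k A) ×
      (restrictScalars (envelopingMap (AlgHom.snd k A B)).toRingHom).obj (regularBimodule k B) :=
  LinearEquiv.ofBijective
    ((regularBimoduleMap (AlgHom.fst k A B)).hom.prod (regularBimoduleMap (AlgHom.snd k A B)).hom)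
    Function.bijective_id

theorem IsBimoduleSection.nonempty_coextendScalars_regularBimodule_equiv {p : C →ₐ[k] A}
    {i : A →ₗ[k] C} (h : IsBimoduleSection p i) :
    Nonempty ((coextendScalars (envelopingMap p).toRingHom).obj (regularBimodule k C)
      ≃ₗ[A ⊗[k] Aᵐᵒᵖ] regularBimodule k A) := by
  have hsurj : Function.Surjective (regularBimoduleMap p) :=
    fun a : A => ⟨i a, h.apply_apply a⟩
  have hker (x : C) (hx : p x = 0) : (i 1 ⊗ₜ[k] MulOpposite.op (i 1)) • x = 0 := by
    rw [tmul_smul_eq_mul_mul_unop, ← h.map_mul_right, hx, mul_zero, map_zero, zero_mul]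
  exact ⟨LinearEquiv.ofBijective _ ((h.tensorProduct h.op).bijective_homEquiv_symm hsurj hker)⟩

namespace IsPeriodicAlgebra

theorem of_isBimoduleSection {p : C →ₐ[k] A} {i : A →ₗ[k] C} (h : IsBimoduleSection p i)
    (hC : IsPeriodicAlgebra k C) : IsPeriodicAlgebra k A := by
  obtain ⟨n, hn, hC⟩ := hC
  obtain ⟨e⟩ := h.nonempty_coextendScalars_regularBimodule_equiv
  exact ⟨n, hn, ((h.tensorProduct h.op).hasProjExactSeq_coextendScalars hC).congr e e⟩

theorem prod (hA : IsPeriodicAlgebra k A) (hB : IsPeriodicAlgebra k B) :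
    IsPeriodicAlgebra k (A × B) := by
  obtain ⟨m, hm, hA⟩ := hA
  obtain ⟨n, hn, hB⟩ := hB
  have fst_section : IsBimoduleSection (AlgHom.fst k A B) (LinearMap.inl k A B) := .fst_inl
  have snd_section : IsBimoduleSection (AlgHom.snd k A B) (LinearMap.inr k A B) := .snd_inr
  have resA := (fst_section.tensorProduct fst_section.op).hasProjExactSeq_restrictScalars (hA.mul n)
  have resB := (snd_section.tensorProduct snd_section.op).hasProjExactSeq_restrictScalars (hB.mul m)
  rw [mul_comm n m] at resB
  exact ⟨m * n, Nat.mul_pos hm hn,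
    (resA.prod resB).congr regularBimoduleProdEquiv.symm regularBimoduleProdEquiv.symm⟩

end IsPeriodicAlgebra

end RegularBimodule

theorem prod_isPeriodicAlgebra_iff_general (k A B : Type) [Field k] [Ring A] [Algebra k A]
    [Ring B] [Algebra k B] :
    IsPeriodicAlgebra k (A × B) ↔ IsPeriodicAlgebra k A ∧ IsPeriodicAlgebra k B :=
  ⟨fun h => ⟨h.of_isBimoduleSection .fst_inl, h.of_isBimoduleSection .snd_inr⟩,
    fun ⟨hA, hB⟩ => hA.prod hB⟩

/-- For finite-dimensional algebras `A`, `B` over a field `k`, the product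
algebra `A × B` is periodic if and only if both `A` and `B` are periodic. -/
theorem prod_isPeriodicAlgebra_iff (k A B : Type) [Field k] [Ring A] [Algebra k A]
    [Ring B] [Algebra k B] [FiniteDimensional k A] [FiniteDimensional k B] :
    IsPeriodicAlgebra k (A × B) ↔ IsPeriodicAlgebra k A ∧ IsPeriodicAlgebra k B :=
  prod_isPeriodicAlgebra_iff_general k A B
end

section
/- Let A be a finite-dimensional algebra over a field k. If A is periodic, then A is self-injective: A is injective as a right module over itself, and also injective as a left module over itself. -/
open TensorProduct

/-! Let `ι : A → P` be the first map of the sequence. All syzygies of the sequence are projective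
as left modules, so `ι` has a left `A`-linear retraction `r`. The element `u = ι 1` satisfies
`a u = u a`, hence so does each of its coordinates `∑ xᵢ ⊗ yᵢ` in a free bimodule containing `P`
as a direct summand. Such a Casimir element yields an `A`-linear map `g ↦ ∑ xᵢ ⊗ g yᵢ` from the
coinduced module `Hom_k(A, A)`, which is injective, to the induced module `A ⊗ A`. Summing over
the coordinates and applying `r` gives an `A`-linear map `Hom_k(A, A) → A` sending the identity
to `r u = 1`, so `A` is a direct summand of an injective module. The statement for right modules
follows by passing to the opposite algebra. -/

section Homological

universe v

variable {R : Type*} [Ring R]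

theorem injective_of_leftInverse {Q P : Type v} [AddCommGroup Q] [Module R Q] [AddCommGroup P]
    [Module R P] [Module.Injective R Q] (i : P →ₗ[R] Q) (r : Q →ₗ[R] P)
    (hri : r ∘ₗ i = LinearMap.id) : Module.Injective R P := by
  refine ⟨fun X Y _ _ _ _ j hj f ↦ ?_⟩
  obtain ⟨F, hF⟩ := Module.Injective.out j hj (i ∘ₗ f)
  refine ⟨r ∘ₗ F, fun x ↦ ?_⟩
  calc r (F (j x)) = r (i (f x)) := by rw [hF, LinearMap.comp_apply]
    _ = f x := LinearMap.congr_fun hri (f x)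

theorem exists_leftInverse_of_exact {M N P : Type*} [AddCommGroup M] [AddCommGroup N]
    [AddCommGroup P] [Module R M] [Module R N] [Module R P] [Module.Projective R P]
    {f : M →ₗ[R] N} {g : N →ₗ[R] P} (hfg : Function.Exact f g) (hf : Function.Injective f)
    (hg : Function.Surjective g) : ∃ r : N →ₗ[R] M, r ∘ₗ f = LinearMap.id :=
  ((hfg.split_tfae hf hg).out 0 1 rfl rfl).mp (Module.projective_lifting_property g _ hg)

theorem projective_ker_of_projective_range {M N : Type*} [AddCommGroup M] [AddCommGroup N]
    [Module R M] [Module R N] [Module.Projective R M] (f : M →ₗ[R] N)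
    [Module.Projective R (LinearMap.range f)] : Module.Projective R (LinearMap.ker f) := by
  have hexact : Function.Exact (LinearMap.ker f).subtype f.rangeRestrict := by
    rw [LinearMap.exact_iff, LinearMap.ker_rangeRestrict, Submodule.range_subtype]
  obtain ⟨r, hr⟩ := exists_leftInverse_of_exact hexact (Submodule.subtype_injective _)
    f.surjective_rangeRestrict
  exact .of_split _ r hr

variable {C : ℕ → Type*} [∀ i, AddCommGroup (C i)] [∀ i, Module R (C i)]
  {d : ∀ i, C (i + 1) →ₗ[R] C i} {n : ℕ}

theorem projective_range_of_exact (hC : ∀ i ≤ n, Module.Projective R (C i))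
    (hsurj : Function.Surjective (d 0))
    (hexact : ∀ i < n, LinearMap.range (d (i + 1)) = LinearMap.ker (d i)) :
    ∀ i ≤ n, Module.Projective R (LinearMap.range (d i))
  | 0, _ => by
    have := hC 0 n.zero_le
    rw [LinearMap.range_eq_top.mpr hsurj]
    exact .of_equiv' Submodule.topEquiv.symm
  | i + 1, hi => by
    have := hC (i + 1) hi
    have := projective_range_of_exact hC hsurj hexact i (by lia)
    rw [hexact i hi]
    exact projective_ker_of_projective_range (d i)

theorem exists_leftInverse_of_exact_of_projective (hn : 1 ≤ n)
    (hC : ∀ i ≤ n, Module.Projective R (C i))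
    (hsurj : Function.Surjective (d 0)) (hinj : Function.Injective (d n))
    (hexact : ∀ i < n, LinearMap.range (d (i + 1)) = LinearMap.ker (d i)) :
    ∃ r : C n →ₗ[R] C (n + 1), r ∘ₗ d n = LinearMap.id := by
  obtain ⟨m, rfl⟩ := Nat.exists_eq_add_of_le' hn
  have := projective_range_of_exact hC hsurj hexact m m.le_succ
  refine exists_leftInverse_of_exact ?_ hinj (d m).surjective_rangeRestrict
  rw [LinearMap.exact_iff, LinearMap.ker_rangeRestrict, hexact m m.lt_succ_self]

end Homological

section RestrictScalars

theorem projective_of_isScalarTower {S R P : Type*} [Ring S] [Ring R] [AddCommGroup P]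
    [Module S R] [Module R P] [Module S P] [IsScalarTower S R R] [IsScalarTower S R P]
    [Module.Projective S R] [Module.Projective R P] : Module.Projective S P := by
  classical
  obtain ⟨s, hs⟩ := Module.projective_def'.mp (inferInstance : Module.Projective R P)
  have : Module.Projective S (P →₀ R) := .of_equiv' (finsuppLequivDFinsupp S).symm
  exact .of_split (s.restrictScalars S) ((Finsupp.linearCombination R id).restrictScalars S)
    (LinearMap.ext fun p ↦ LinearMap.congr_fun hs p)

open ModuleCat

variable {S R : Type*} [Ring S] [Ring R] (φ : S →+* R)

theorem range_restrictScalars_map_eq_ker {L M N : ModuleCat R} {f : L ⟶ M} {g : M ⟶ N}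
    (h : LinearMap.range f.hom = LinearMap.ker g.hom) :
    LinearMap.range ((restrictScalars φ).map f).hom =
      LinearMap.ker ((restrictScalars φ).map g).hom := by
  ext x
  exact SetLike.ext_iff.mp h x

theorem projective_restrictScalars (hφ : Module.Projective S ((restrictScalars φ).obj (of R R)))
    (P : ModuleCat R) [Module.Projective R P] :
    Module.Projective S ((restrictScalars φ).obj P) := by
  let : Module S R := Module.compHom R φ
  let : Module S P := Module.compHom P φ
  have : IsScalarTower S R R := ⟨fun s a b ↦ mul_assoc (φ s) a b⟩
  have : IsScalarTower S R P := ⟨fun s a b ↦ mul_smul (φ s) a b⟩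
  have : Module.Projective S R := hφ
  exact projective_of_isScalarTower (S := S) (R := R) (P := P)

theorem projective_restrictScalars_of_ringEquiv (e : S ≃+* R) :
    Module.Projective S ((restrictScalars e.toRingHom).obj (of R R)) :=
  .of_equiv' (M := S) (P := (restrictScalars e.toRingHom).obj (of R R))
    { e.toAddEquiv with map_smul' := map_mul e }

end RestrictScalars

namespace HasProjExactSeq

open ModuleCat CategoryTheory

variable {S R : Type} [Ring S] [Ring R] (φ : S →+* R) {M M' N : ModuleCat.{0} R} {n : ℕ}

theorem congr_left (h : HasProjExactSeq R M N n) (e : M' ≃ₗ[R] M) : HasProjExactSeq R M' N n :=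
  let ⟨P, d, eN, eM, hd⟩ := h
  ⟨P, d, eN, e.trans eM, hd⟩

theorem restrictScalars (hφ : Module.Projective S ((restrictScalars φ).obj (of R R)))
    (h : HasProjExactSeq R M N n) :
    HasProjExactSeq S ((ModuleCat.restrictScalars φ).obj M)
      ((ModuleCat.restrictScalars φ).obj N) n := by
  obtain ⟨P, d, eN, eM, hP, hsurj, hinj, hexact⟩ := h
  refine ⟨fun i ↦ (ModuleCat.restrictScalars φ).obj (P i),
    fun i ↦ ((ModuleCat.restrictScalars φ).map (ofHom (d i))).hom,
    ((ModuleCat.restrictScalars φ).mapIso eN.toModuleIso).toLinearEquiv,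
    ((ModuleCat.restrictScalars φ).mapIso eM.toModuleIso).toLinearEquiv, fun i hi hin ↦ ?_,
    hsurj, hinj, fun i hi ↦ range_restrictScalars_map_eq_ker φ (hexact i hi)⟩
  have := hP i hi hin
  exact projective_restrictScalars φ hφ (P i)

theorem exists_isSplitMono_restrictScalars (h : HasProjExactSeq R M N n) (hn : 1 ≤ n)
    (hφ : Module.Projective S ((ModuleCat.restrictScalars φ).obj (of R R)))
    (hN : Module.Projective S ((ModuleCat.restrictScalars φ).obj N)) :
    ∃ (P : ModuleCat R) (ι : M ⟶ P), Module.Projective R P ∧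
      IsSplitMono ((ModuleCat.restrictScalars φ).map ι) := by
  obtain ⟨P, d, eN, eM, hP, hsurj, hinj, hexact⟩ := h
  have hPS : ∀ i ≤ n, Module.Projective S ((ModuleCat.restrictScalars φ).obj (P i)) := by
    rintro (_ | i) hi
    · exact .of_equiv' ((ModuleCat.restrictScalars φ).mapIso eN.toModuleIso).toLinearEquiv.symm
    · have := hP (i + 1) i.succ_pos hi
      exact projective_restrictScalars φ hφ _
  obtain ⟨r, hr⟩ := exists_leftInverse_of_exact_of_projective
    (C := fun i ↦ (ModuleCat.restrictScalars φ).obj (P i))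
    (d := fun i ↦ ((ModuleCat.restrictScalars φ).map (ofHom (d i))).hom) hn hPS hsurj hinj
    fun i hi ↦ range_restrictScalars_map_eq_ker φ (hexact i hi)
  have hsplit : IsSplitMono ((ModuleCat.restrictScalars φ).map (ofHom (d n))) :=
    ⟨⟨ofHom (X := (ModuleCat.restrictScalars φ).obj (P n))
      (Y := (ModuleCat.restrictScalars φ).obj (P (n + 1))) r, ModuleCat.hom_ext hr⟩⟩
  refine ⟨P n, eM.toModuleIso.hom ≫ ofHom (d n), hP n hn le_rfl, ?_⟩
  rw [Functor.map_comp]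
  infer_instance

end HasProjExactSeq

section Coextension

open ModuleCat MulOpposite

universe u v w

variable {k : Type u} {S : Type v}

theorem injective_coextendScalars [Ring k] [Ring S] (φ : k →+* S) (V : ModuleCat.{max v w} k)
    [Module.Injective k V] :
    Module.Injective S ((coextendScalars.{u, v, max v w} φ).obj V) := by
  have := Module.injective_object_of_injective_module k V
  have := (restrictCoextendScalarsAdj.{max v w, u, v} φ).map_injective V this
  exact Module.injective_module_of_injective_object S ((coextendScalars φ).obj V)

variable [CommRing k] [Ring S] [Algebra k S] {T : Type*} [Ring T] [Algebra k T]

theorem map_smul_of_map_tmul_smul {M M' : Type*} [AddCommGroup M] [Module (S ⊗[k] T) M]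
    [AddCommGroup M'] [Module (S ⊗[k] T) M'] (f : M →+ M')
    (hf : ∀ (s : S) (t : T) (m : M), f ((s ⊗ₜ[k] t) • m) = (s ⊗ₜ[k] t) • f m)
    (x : S ⊗[k] T) (m : M) : f (x • m) = x • f m := by
  induction x with
  | zero => rw [zero_smul, zero_smul, map_zero]
  | add x y hx hy => rw [add_smul, add_smul, map_add, hx, hy]
  | tmul s t => exact hf s t m

theorem tmul_one_mul_eq_smul (a : S) (t : S ⊗[k] T) :
    (a ⊗ₜ[k] (1 : T)) * t = a • t := by
  rw [← smul_one_mul, Algebra.TensorProduct.one_def, smul_tmul', smul_eq_mul, mul_one]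

variable {P : Type*} [AddCommGroup P] [Module (S ⊗[k] Sᵐᵒᵖ) P]

variable (k S) in
/-- `u` lies in the centre `{u | a u = u a for all a}` of the `S`-`S`-bimodule `P`. -/
def IsBimoduleCentral (u : P) : Prop :=
  ∀ a : S, (a ⊗ₜ[k] (1 : Sᵐᵒᵖ)) • u = ((1 : S) ⊗ₜ[k] op a) • u

theorem IsBimoduleCentral.map {Q : Type*} [AddCommGroup Q] [Module (S ⊗[k] Sᵐᵒᵖ) Q]
    {u : P} (hu : IsBimoduleCentral k S u) (f : P →ₗ[S ⊗[k] Sᵐᵒᵖ] Q) :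
    IsBimoduleCentral k S (f u) := fun a ↦ by
  rw [← map_smul, ← map_smul, hu a]

variable {V : ModuleCat.{w} k}

/-- The coinduced module `Hom_k(S, V)`, with its elements read as linear maps on `Sᵐᵒᵖ` so that
they can be applied to the second factor of `S ⊗[k] Sᵐᵒᵖ`. -/
noncomputable def coextendScalarsEquivOp :
    (coextendScalars (algebraMap k S)).obj V ≃+ (Sᵐᵒᵖ →ₗ[k] V) where
  toFun g :=
    { toFun y := g y.unop
      map_add' x y := (CoextendScalars.equiv _ _ g).map_add x.unop y.unop
      map_smul' c y := by
        rw [unop_smul, Algebra.smul_def]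
        exact (CoextendScalars.equiv _ _ g).map_smul c y.unop }
  invFun g := (CoextendScalars.equiv _ _).symm
    { toFun x := g (op x)
      map_add' x y := g.map_add (op x) (op y)
      map_smul' c (x : S) := by
        rw [RingHom.id_apply, ← map_smul, ← op_smul, Algebra.smul_def]
        rfl }
  map_add' _ _ := rfl

theorem baseChange_coextendScalarsEquivOp_smul (g : (coextendScalars (algebraMap k S)).obj V)
    (a : S) (t : S ⊗[k] Sᵐᵒᵖ) :
    (coextendScalarsEquivOp (a • g)).baseChange S t =
      (coextendScalarsEquivOp g).baseChange S (((1 : S) ⊗ₜ op a) * t) := by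
  induction t with
  | zero => simp
  | add t t' ht ht' => rw [mul_add, map_add, map_add, ht, ht']
  | tmul x y =>
    rw [Algebra.TensorProduct.tmul_mul_tmul, one_mul]
    rfl

/-- The map `g ↦ ∑ xᵢ ⊗ g yᵢ` from the coinduced to the induced module of `V` given by a Casimir
element `v = ∑ xᵢ ⊗ yᵢ`, that is, a central element of the free bimodule of rank one. Centrality
of `v` is what makes it `S`-linear. -/
noncomputable def coextendScalarsToTensor (v : S ⊗[k] Sᵐᵒᵖ) (hv : IsBimoduleCentral k S v) :
    (coextendScalars (algebraMap k S)).obj V →ₗ[S] S ⊗[k] V where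
  toFun g := (coextendScalarsEquivOp g).baseChange S v
  map_add' g h := by rw [map_add, LinearMap.baseChange_add, LinearMap.add_apply]
  map_smul' a g := by
    rw [baseChange_coextendScalarsEquivOp_smul, ← smul_eq_mul, ← hv a, smul_eq_mul,
      tmul_one_mul_eq_smul, map_smul, RingHom.id_apply]

theorem coextendScalarsToTensor_symm_id (v : S ⊗[k] Sᵐᵒᵖ) (hv : IsBimoduleCentral k S v) :
    coextendScalarsToTensor (V := of k Sᵐᵒᵖ) v hv
      (coextendScalarsEquivOp.symm LinearMap.id) = v := by
  change LinearMap.baseChange S _ v = v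
  rw [AddEquiv.apply_symm_apply, LinearMap.baseChange_id, LinearMap.id_apply]

theorem injective_self_of_isBimoduleCentral [Module.Injective k S] [Module S P]
    [IsScalarTower S (S ⊗[k] Sᵐᵒᵖ) P] [Module.Projective (S ⊗[k] Sᵐᵒᵖ) P] {u : P}
    (hu : IsBimoduleCentral k S u) (r : P →ₗ[S] S) (hr : r u = 1) : Module.Injective S S := by
  obtain ⟨s, hs⟩ := Module.projective_def'.mp ‹Module.Projective (S ⊗[k] Sᵐᵒᵖ) P›
  have hcoord (p : P) : IsBimoduleCentral k S (s u p) := hu.map (Finsupp.lapply p ∘ₗ s)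
  let Q := (coextendScalars (algebraMap k S)).obj (of k Sᵐᵒᵖ)
  have : Module.Injective k Sᵐᵒᵖ :=
    injective_of_leftInverse (opLinearEquiv k).symm.toLinearMap (opLinearEquiv k).toLinearMap
      (opLinearEquiv k).symm.symm_comp
  have : Module.Injective S Q := injective_coextendScalars _ _
  let g : Q := coextendScalarsEquivOp.symm LinearMap.id
  let ρ : Q →ₗ[S] S := ∑ p ∈ (s u).support, r ∘ₗ
    (LinearMap.toSpanSingleton (S ⊗[k] Sᵐᵒᵖ) P p).restrictScalars S ∘ₗ
      coextendScalarsToTensor (s u p) (hcoord p)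
  have hρ : ρ g = 1 := calc
    ρ g = ∑ p ∈ (s u).support, r (s u p • p) := by
      simp only [ρ, LinearMap.sum_apply, LinearMap.comp_apply, LinearMap.coe_restrictScalars,
        LinearMap.toSpanSingleton_apply]
      exact Finset.sum_congr rfl fun p _ ↦
        congrArg (fun t ↦ r (t • p)) (coextendScalarsToTensor_symm_id _ (hcoord p))
    _ = r (Finsupp.linearCombination _ id (s u)) := (map_sum r _ _).symm
    _ = r u := congrArg r (LinearMap.congr_fun hs u)
    _ = 1 := hr
  refine injective_of_leftInverse (LinearMap.toSpanSingleton S Q g) ρ (LinearMap.ext_ring ?_)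
  rw [LinearMap.comp_apply, LinearMap.toSpanSingleton_apply, one_smul, hρ, LinearMap.id_apply]

end Coextension

section EnvelopingAlgebra

open ModuleCat MulOpposite CategoryTheory Algebra.TensorProduct

universe w

section CommRing

variable (k A : Type*) [CommRing k] [Ring A] [Algebra k A]

/-- The left `A`-module underlying an `A`-`A`-bimodule. -/
noncomputable abbrev toLeftModule : ModuleCat.{w} (A ⊗[k] Aᵐᵒᵖ) ⥤ ModuleCat.{w} A :=
  restrictScalars includeLeftRingHom

/-- The right `A`-module underlying an `A`-`A`-bimodule. -/
noncomputable abbrev toRightModule : ModuleCat.{w} (A ⊗[k] Aᵐᵒᵖ) ⥤ ModuleCat.{w} Aᵐᵒᵖ :=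
  restrictScalars (includeRight : Aᵐᵒᵖ →ₐ[k] A ⊗[k] Aᵐᵒᵖ).toRingHom

theorem projective_toLeftModule_envelopingAlgebra [Module.Projective k Aᵐᵒᵖ] :
    Module.Projective A ((toLeftModule k A).obj (of _ (A ⊗[k] Aᵐᵒᵖ))) :=
  .of_equiv' (M := A ⊗[k] Aᵐᵒᵖ)
    { AddEquiv.refl _ with map_smul' a t := (tmul_one_mul_eq_smul a t).symm }

/-- `A` as a right module over itself is the regular left module of `Aᵐᵒᵖ`. -/
def opLinearEquivSelf : A ≃ₗ[Aᵐᵒᵖ] Aᵐᵒᵖ :=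
  { opAddEquiv with map_smul' _ _ := rfl }

/-- The enveloping algebras of `Aᵐᵒᵖ` and `A` are identified by swapping the tensor factors:
`op a ⊗ op (op b)` corresponds to `b ⊗ op a`. -/
noncomputable def opEnvelopingEquiv : Aᵐᵒᵖ ⊗[k] Aᵐᵒᵖᵐᵒᵖ ≃ₐ[k] A ⊗[k] Aᵐᵒᵖ :=
  (Algebra.TensorProduct.congr .refl (AlgEquiv.opOp k A).symm).trans
    (Algebra.TensorProduct.comm k Aᵐᵒᵖ A)

variable {k A} in
theorem opEnvelopingEquiv_tmul_one (a : Aᵐᵒᵖ) :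
    opEnvelopingEquiv k A (a ⊗ₜ 1) = 1 ⊗ₜ a := by
  simp [opEnvelopingEquiv]

end CommRing

variable (k A : Type) [Field k] [Ring A] [Algebra k A]

/-- The left module underlying the regular bimodule is the regular left module. -/
noncomputable def toLeftModuleRegularBimoduleEquiv :
    (toLeftModule k A).obj (regularBimodule k A) ≃ₗ[A] A :=
  { AddEquiv.refl A with
    map_smul' a (m : A) := congrArg (a * ·) (mul_one m) }

/-- The right module underlying the regular bimodule is the regular right module, written as a
left module over `Aᵐᵒᵖ`. -/
noncomputable def toRightModuleRegularBimoduleEquiv :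
    (toRightModule k A).obj (regularBimodule k A) ≃ₗ[Aᵐᵒᵖ] Aᵐᵒᵖ :=
  { opAddEquiv (α := A) with
    map_smul' a (m : A) := congrArg op (one_mul (m * a.unop)) }

theorem isBimoduleCentral_one : IsBimoduleCentral k A (P := regularBimodule k A) (1 : A) :=
  fun a ↦ show a * ((1 : A) * 1) = 1 * (1 * a) by simp only [one_mul, mul_one]

variable {k A} in
theorem HasProjExactSeq.injective_self {N : ModuleCat.{0} (A ⊗[k] Aᵐᵒᵖ)} {n : ℕ}
    (h : HasProjExactSeq (A ⊗[k] Aᵐᵒᵖ) (regularBimodule k A) N n) (hn : 1 ≤ n)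
    (hN : Module.Projective A ((toLeftModule k A).obj N)) :
    Module.Injective A A := by
  obtain ⟨P, ι, hP, ⟨⟨σ, hσ⟩⟩⟩ :=
    h.exists_isSplitMono_restrictScalars _ hn (projective_toLeftModule_envelopingAlgebra k A) hN
  let : Module A P := Module.compHom P (includeLeftRingHom : A →+* A ⊗[k] Aᵐᵒᵖ)
  have : IsScalarTower A (A ⊗[k] Aᵐᵒᵖ) P := ⟨fun a t p ↦ by
    rw [← tmul_one_mul_eq_smul]
    exact mul_smul (a ⊗ₜ[k] (1 : Aᵐᵒᵖ)) t p⟩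
  have := Module.injective_of_isSemisimpleRing k A
  let r : P →ₗ[A] A := (toLeftModuleRegularBimoduleEquiv k A).toLinearMap ∘ₗ σ.hom
  exact injective_self_of_isBimoduleCentral ((isBimoduleCentral_one k A).map ι.hom) r
    (LinearMap.congr_fun (ModuleCat.hom_ext_iff.mp hσ) (1 : A))

/-- The regular bimodule of `Aᵐᵒᵖ` is that of `A` with the left and right actions swapped. -/
noncomputable def regularBimoduleOpEquiv :
    regularBimodule k Aᵐᵒᵖ ≃ₗ[Aᵐᵒᵖ ⊗[k] Aᵐᵒᵖᵐᵒᵖ]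
      (restrictScalars (opEnvelopingEquiv k A).toRingEquiv.toRingHom).obj (regularBimodule k A) :=
  { (opAddEquiv : A ≃+ Aᵐᵒᵖ).symm with
    map_smul' := map_smul_of_map_tmul_smul (M := regularBimodule k Aᵐᵒᵖ)
      (M' := (restrictScalars (opEnvelopingEquiv k A).toRingEquiv.toRingHom).obj
        (regularBimodule k A))
      (opAddEquiv : A ≃+ Aᵐᵒᵖ).symm.toAddMonoidHom fun a b (m : Aᵐᵒᵖ) ↦
        mul_assoc (unop (unop b)) (unop m) (unop a) }

variable {k A} in
theorem HasProjExactSeq.injective_op {N : ModuleCat.{0} (A ⊗[k] Aᵐᵒᵖ)} {n : ℕ}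
    (h : HasProjExactSeq (A ⊗[k] Aᵐᵒᵖ) (regularBimodule k A) N n) (hn : 1 ≤ n)
    (hN : Module.Projective Aᵐᵒᵖ ((toRightModule k A).obj N)) :
    Module.Injective Aᵐᵒᵖ A := by
  let e := (opEnvelopingEquiv k A).toRingEquiv
  let N' := (ModuleCat.restrictScalars e.toRingHom).obj N
  have hop : HasProjExactSeq (Aᵐᵒᵖ ⊗[k] Aᵐᵒᵖᵐᵒᵖ) (regularBimodule k Aᵐᵒᵖ) N' n :=
    (h.restrictScalars e.toRingHom (projective_restrictScalars_of_ringEquiv e)).congr_left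
      (regularBimoduleOpEquiv k A)
  have hN' : Module.Projective Aᵐᵒᵖ ((toLeftModule k Aᵐᵒᵖ).obj N') :=
    .of_equiv' (M := (toRightModule k A).obj N) { AddEquiv.refl _ with
      map_smul' a (x : N) :=
        congrArg (fun t : A ⊗[k] Aᵐᵒᵖ ↦ t • x) (opEnvelopingEquiv_tmul_one a).symm }
  have : Module.Injective Aᵐᵒᵖ Aᵐᵒᵖ := hop.injective_self hn hN'
  exact injective_of_leftInverse (opLinearEquivSelf A).toLinearMap
    (opLinearEquivSelf A).symm.toLinearMap (opLinearEquivSelf A).symm_comp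

end EnvelopingAlgebra

theorem isPeriodicAlgebra_selfInjective_general (k A : Type) [Field k] [Ring A] [Algebra k A]
    {N : ModuleCat.{0} (A ⊗[k] Aᵐᵒᵖ)} {n : ℕ} (hn : 1 ≤ n)
    (h : HasProjExactSeq (A ⊗[k] Aᵐᵒᵖ) (regularBimodule k A) N n)
    (hleft : Module.Projective A ((toLeftModule k A).obj N))
    (hright : Module.Projective Aᵐᵒᵖ ((toRightModule k A).obj N)) :
    Module.Injective A A ∧ Module.Injective Aᵐᵒᵖ A :=
  ⟨h.injective_self hn hleft, h.injective_op hn hright⟩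

/-- A periodic finite-dimensional algebra is self-injective: `A` is
injective as a left module over itself and as a right module over itself (a right
`A`-module being a left `Aᵐᵒᵖ`-module). -/
theorem isPeriodicAlgebra_selfInjective (k A : Type) [Field k] [Ring A] [Algebra k A]
    [FiniteDimensional k A] (h : IsPeriodicAlgebra k A) :
    Module.Injective A A ∧ Module.Injective Aᵐᵒᵖ A := by
  obtain ⟨n, hn, hseq⟩ := h
  exact isPeriodicAlgebra_selfInjective_general k A hn hseq
    (.of_equiv' (toLeftModuleRegularBimoduleEquiv k A).symm)
    (.of_equiv' (toRightModuleRegularBimoduleEquiv k A).symm)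
end

section
/- Let A and B be finite-dimensional algebras over a field k, and suppose A and B are Morita equivalent over k, i.e., there is a k-linear equivalence between the category of A-modules and the category of B-modules. Then A is periodic if and only if B is periodic. -/
open TensorProduct CategoryTheory

/-!
For a `k`-linear category `C`, let `Cᵉ` be the category with the same objects and with
`Cᵉ(x, y) = C(y, x) ⊗ C(x, y)`. If every object of `C` is a direct summand of some power `xⁿ` and
`C(x, x) ≃ Aᵐᵒᵖ`, then evaluation at `x` is an equivalence from additive functors on `Cᵉ` to
`A`-`A`-bimodules, and it sends the functor `z ↦ C(z, z)` to the regular bimodule `A`. Hence, if `C`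
contains two such objects, for algebras `A` and `B`, their bimodule categories are equivalent in a
way that matches the regular bimodules, and exact sequences with projective terms are transported.

A Morita equivalence `F` provides such a `C`, namely `add A` inside the category of `A`-modules,
with the objects `A` and `F⁻¹ B`: being a separator is preserved by equivalences, and the regular
module is a direct summand of a power of any separator.
-/

universe w v v₁ v₂ u u₁ u₂

/-! ### Transport of projective exact sequences -/

section ExactSequences

variable {R S : Type} [Ring R] [Ring S]

lemma HasProjExactSeq.map_equivalence {M N : ModuleCat.{0} R} {n : ℕ}
    (h : HasProjExactSeq R M N n) (E : ModuleCat.{0} R ≌ ModuleCat.{0} S) :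
    HasProjExactSeq S (E.functor.obj M) (E.functor.obj N) n := by
  obtain ⟨P, d, e₀, e₁, hP, hsurj, hinj, hexact⟩ := h
  have : E.functor.Additive := Functor.additive_of_preserves_binary_products E.functor
  let δ (i : ℕ) : P (i + 1) ⟶ P i := ModuleCat.ofHom (d i)
  refine ⟨fun i => E.functor.obj (P i), fun i => (E.functor.map (δ i)).hom,
    (E.functor.mapIso e₀.toModuleIso).toLinearEquiv,
    (E.functor.mapIso e₁.toModuleIso).toLinearEquiv, fun i h₁ h₂ => ?_, ?_, ?_, fun i hi => ?_⟩
  · have := hP i h₁ h₂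
    rw [IsProjective.iff_projective]
    exact (E.map_projective_iff _).2 ((IsProjective.iff_projective _).1 this)
  · have : Epi (δ 0) := (ModuleCat.epi_iff_surjective _).2 hsurj
    exact (ModuleCat.epi_iff_surjective _).1 inferInstance
  · have : Mono (δ n) := (ModuleCat.mono_iff_injective _).2 hinj
    exact (ModuleCat.mono_iff_injective _).1 inferInstance
  · have w : δ (i + 1) ≫ δ i = 0 :=
      ModuleCat.hom_ext (LinearMap.range_le_ker_iff.1 (hexact i hi).le)
    have : (ShortComplex.mk _ _ w).Exact :=
      (ShortComplex.moduleCat_exact_iff_range_eq_ker _).2 (hexact i hi)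
    exact (ShortComplex.moduleCat_exact_iff_range_eq_ker _).1 (this.map E.functor)

lemma HasProjExactSeq.of_iso {M M' N N' : ModuleCat.{0} R} {n : ℕ}
    (h : HasProjExactSeq R M N n) (eM : M ≅ M') (eN : N ≅ N') : HasProjExactSeq R M' N' n := by
  obtain ⟨P, d, e₀, e₁, hP, hexact⟩ := h
  exact ⟨P, d, e₀ ≪≫ₗ eN.toLinearEquiv, eM.symm.toLinearEquiv ≪≫ₗ e₁, hP, hexact⟩

lemma IsPeriodicAlgebra.of_equivalence {k A B : Type} [Field k] [Ring A] [Algebra k A] [Ring B]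
    [Algebra k B] (hA : IsPeriodicAlgebra k A)
    (E : ModuleCat.{0} (A ⊗[k] Aᵐᵒᵖ) ≌ ModuleCat.{0} (B ⊗[k] Bᵐᵒᵖ))
    (i : E.functor.obj (regularBimodule k A) ≅ regularBimodule k B) : IsPeriodicAlgebra k B := by
  obtain ⟨n, hn, h⟩ := hA
  exact ⟨n, hn, (h.map_equivalence E).of_iso i i⟩

end ExactSequences

/-! ### Direct summands of powers of an object -/

/-- `y` lies in `add x`, i.e. it is a direct summand of some `x ^ n`. This is phrased through the
components of the inclusion and the retraction, so that no biproducts are needed. -/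
def MemAdd {C : Type u} [Category.{v} C] [Preadditive C] (x y : C) : Prop :=
  ∃ (n : ℕ) (p : Fin n → (y ⟶ x)) (q : Fin n → (x ⟶ y)), ∑ i, p i ≫ q i = 𝟙 y

namespace MemAdd

variable {C : Type u₁} [Category.{v₁} C] [Preadditive C] {D : Type u₂} [Category.{v₂} D]
  [Preadditive D] {x y z : C}

lemma of_sum_comp_eq_id {ι : Type w} [Fintype ι] (p : ι → (y ⟶ x)) (q : ι → (x ⟶ y))
    (h : ∑ i, p i ≫ q i = 𝟙 y) : MemAdd x y := by
  let e := (Fintype.equivFin ι).symm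
  exact ⟨_, p ∘ e, q ∘ e, (e.sum_comp fun i => p i ≫ q i).trans h⟩

lemma of_iso (e : x ≅ y) : MemAdd x y :=
  of_sum_comp_eq_id (ι := Unit) (fun _ => e.inv) (fun _ => e.hom) (by simp)

lemma trans (hxy : MemAdd x y) (hyz : MemAdd y z) : MemAdd x z := by
  obtain ⟨m, p, q, hpq⟩ := hxy
  obtain ⟨n, r, s, hrs⟩ := hyz
  refine of_sum_comp_eq_id (fun j : Fin n × Fin m => r j.1 ≫ p j.2) (fun j => q j.2 ≫ s j.1) ?_
  calc ∑ j : Fin n × Fin m, (r j.1 ≫ p j.2) ≫ q j.2 ≫ s j.1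
    _ = ∑ j, r j ≫ (∑ i, p i ≫ q i) ≫ s j := by
      simp only [Fintype.sum_prod_type, Preadditive.sum_comp, Preadditive.comp_sum, Category.assoc]
    _ = 𝟙 z := by simp only [hpq, Category.id_comp, hrs]

lemma of_map (F : C ⥤ D) [F.Additive] [F.Full] [F.Faithful]
    (h : MemAdd (F.obj x) (F.obj y)) : MemAdd x y := by
  obtain ⟨n, p, q, hpq⟩ := h
  refine ⟨n, fun i => F.preimage (p i), fun i => F.preimage (q i), F.map_injective ?_⟩
  simpa only [F.map_sum, F.map_comp, F.map_preimage, F.map_id] using hpq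

end MemAdd

/-! ### Evaluation of additive functors -/

section Evaluation

variable {D : Type u} [Category.{v} D] [Preadditive D] {E : Type u₁} [Category.{v₁} E]
  [Preadditive E]

lemma natTrans_app_eq_sum {N N' : D ⥤ E} [N.Additive] {x y : D} {n : ℕ}
    {p : Fin n → (y ⟶ x)} {q : Fin n → (x ⟶ y)} (hpq : ∑ i, p i ≫ q i = 𝟙 y) (α : N ⟶ N') :
    α.app y = ∑ i, N.map (p i) ≫ α.app x ≫ N'.map (q i) := by
  simp only [← α.naturality, ← Preadditive.sum_comp, ← Category.assoc, ← N.map_comp, ← N.map_sum,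
    hpq, N.map_id, Category.id_comp]

lemma natTrans_ext_of_memAdd {N N' : D ⥤ E} [N.Additive] {x : D} (hx : ∀ y, MemAdd x y)
    {α β : N ⟶ N'} (h : α.app x = β.app x) : α = β := by
  ext y
  obtain ⟨n, p, q, hpq⟩ := hx y
  rw [natTrans_app_eq_sum hpq α, natTrans_app_eq_sum hpq β, h]

lemma exists_natTrans_app_eq {N N' : D ⥤ E} [N.Additive] [N'.Additive] {x : D}
    (hx : ∀ y, MemAdd x y) (g : N.obj x ⟶ N'.obj x)
    (hg : ∀ f : x ⟶ x, N.map f ≫ g = g ≫ N'.map f) : ∃ α : N ⟶ N', α.app x = g := by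
  choose n p q hpq using hx
  have map_comp_app {y : D} (f : x ⟶ y) :
      N.map f ≫ ∑ i, N.map (p y i) ≫ g ≫ N'.map (q y i) = g ≫ N'.map f :=
    calc N.map f ≫ ∑ i, N.map (p y i) ≫ g ≫ N'.map (q y i)
      _ = ∑ i, N.map (f ≫ p y i) ≫ g ≫ N'.map (q y i) := by
        simp only [Preadditive.comp_sum, N.map_comp, Category.assoc]
      _ = ∑ i, g ≫ N'.map (f ≫ p y i ≫ q y i) := by
        simp only [reassoc_of% hg, ← N'.map_comp, Category.assoc]
      _ = g ≫ N'.map f := by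
        rw [← Preadditive.comp_sum, ← N'.map_sum, ← Preadditive.comp_sum, hpq, Category.comp_id]
  refine ⟨{ app y := ∑ i, N.map (p y i) ≫ g ≫ N'.map (q y i), naturality y z h := ?_ }, ?_⟩
  · calc N.map h ≫ ∑ j, N.map (p z j) ≫ g ≫ N'.map (q z j)
      _ = N.map (∑ i, p y i ≫ q y i ≫ h) ≫ ∑ j, N.map (p z j) ≫ g ≫ N'.map (q z j) := by
        simp only [← Category.assoc, ← Preadditive.sum_comp, hpq, Category.id_comp]
      _ = ∑ i, N.map (p y i) ≫ g ≫ N'.map (q y i ≫ h) := by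
        simp only [N.map_sum, N.map_comp _ (_ ≫ _), Preadditive.sum_comp, Category.assoc,
          map_comp_app]
      _ = (∑ i, N.map (p y i) ≫ g ≫ N'.map (q y i)) ≫ N'.map h := by
        simp only [N'.map_comp, Preadditive.sum_comp, Category.assoc]
  · simpa only [N.map_id, N'.map_id, Category.id_comp, Category.comp_id] using map_comp_app (𝟙 x)

/-- Evaluation at `x` of additive functors, with its action of `End x`: the additive functor `N` is
sent to the left `End x`-module `N x`. -/
noncomputable def evaluationAt (x : D) : (D ⥤+ AddCommGrpCat.{v}) ⥤ ModuleCat.{v} (End x) where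
  obj N := ModuleCat.mkOfSMul (A := N.obj.obj x)
    { N.obj.mapEnd x with
      map_zero' := N.obj.map_zero x x
      map_add' _ _ := N.obj.map_add }
  map α := ModuleCat.homMk (α.hom.app x) fun f => (α.hom.naturality f).symm

lemma evaluationAt_faithful {x : D} (hx : ∀ y, MemAdd x y) : (evaluationAt x).Faithful where
  map_injective {N N' α β} h := by
    ext1
    refine natTrans_ext_of_memAdd hx ?_
    exact congr((forget₂ _ AddCommGrpCat).map $h)

lemma evaluationAt_full {x : D} (hx : ∀ y, MemAdd x y) : (evaluationAt x).Full where
  map_surjective {N N'} g := by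
    obtain ⟨α, hα⟩ := exists_natTrans_app_eq (N := N.obj) (N' := N'.obj) hx
      ((forget₂ _ AddCommGrpCat).map g)
      fun f => (ModuleCat.smul_naturality g f).symm
    refine ⟨⟨α⟩, ?_⟩
    ext m
    exact congr($hα m)

lemma evaluationAt_essSurj (x : D) : (evaluationAt x).EssSurj where
  mem_essImage M := by
    refine ⟨.of ((preadditiveYonedaObj x).rightOp ⋙ preadditiveYoneda.obj M), ⟨?_⟩⟩
    refine LinearEquiv.toModuleIso
      { toFun f := f.hom (𝟙 x)
        invFun m := ModuleCat.ofHom (LinearMap.toSpanSingleton (End x) M m)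
        left_inv f := ?_
        right_inv m := one_smul (End x) m
        map_add' f g := rfl
        map_smul' r f := ?_ }
    · exact congr(f.hom $((Category.comp_id r).trans (Category.id_comp r).symm)).trans
        (f.hom.map_smul r (𝟙 x))
    · refine ModuleCat.hom_ext (LinearMap.ext fun r => ?_)
      exact (f.hom.map_smul (r : End x) (𝟙 x)).symm.trans congr(f.hom $(Category.id_comp r))

lemma evaluationAt_isEquivalence {x : D} (hx : ∀ y, MemAdd x y) :
    (evaluationAt x).IsEquivalence where
  faithful := evaluationAt_faithful hx
  full := evaluationAt_full hx
  essSurj := evaluationAt_essSurj x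

end Evaluation

/-! ### The enveloping category -/

/-- The enveloping category of a `k`-linear category `C`: it has the same objects, and the morphisms
`x ⟶ y` are the elements of `C(y, x) ⊗[k] C(x, y)`. Additive functors on it are the
`C`-`C`-bimodules on which `k` acts centrally. The ring `k` is recorded in the type because the
morphisms depend on it. -/
structure EnvelopingCategory (k : Type w) (C : Type u) where
  /-- The underlying object of `C`. -/
  obj : C

namespace EnvelopingCategory

variable {k : Type w} [CommRing k] {C : Type u} [Category.{v} C] [Preadditive C] [Linear k C]

noncomputable instance : Category.{v} (EnvelopingCategory k C) where
  Hom X Y := (Y.obj ⟶ X.obj) ⊗[k] (X.obj ⟶ Y.obj)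
  id X := 𝟙 X.obj ⊗ₜ 𝟙 X.obj
  comp {X Y Z} s t := TensorProduct.map₂ (Linear.comp Z.obj Y.obj X.obj).flip
    (Linear.comp X.obj Y.obj Z.obj) s t
  id_comp {X Y} t := by
    induction t with
    | zero => simp
    | tmul => simp
    | add s t hs ht => simp only [map_add, hs, ht]
  comp_id {X Y} t := by
    induction t with
    | zero => simp
    | tmul => simp
    | add s t hs ht => simp only [map_add, LinearMap.add_apply, hs, ht]
  assoc {W X Y Z} r s t := by
    induction r with
    | zero => simp
    | add r r' hr hr' => simp only [map_add, LinearMap.add_apply, hr, hr']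
    | tmul =>
      induction s with
      | zero => simp
      | add s s' hs hs' => simp only [map_add, LinearMap.add_apply, hs, hs']
      | tmul =>
        induction t with
        | zero => simp
        | add t t' ht ht' => simp only [map_add, ht, ht']
        | tmul => simp

noncomputable instance : Preadditive (EnvelopingCategory k C) where
  homGroup X Y := inferInstanceAs (AddCommGroup ((Y.obj ⟶ X.obj) ⊗[k] (X.obj ⟶ Y.obj)))
  add_comp X Y Z s s' t := LinearMap.map_add₂ (TensorProduct.map₂
    (Linear.comp Z.obj Y.obj X.obj).flip (Linear.comp X.obj Y.obj Z.obj)) s s' t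
  comp_add X Y Z s t t' := (TensorProduct.map₂ (Linear.comp Z.obj Y.obj X.obj).flip
    (Linear.comp X.obj Y.obj Z.obj) s).map_add t t'

/-- The morphism of the enveloping category given by a pure tensor. -/
def homMk {X Y : EnvelopingCategory k C} (f : Y.obj ⟶ X.obj) (g : X.obj ⟶ Y.obj) : X ⟶ Y :=
  f ⊗ₜ[k] g

lemma homMk_comp_homMk {X Y Z : EnvelopingCategory k C} (f : Y.obj ⟶ X.obj) (g : X.obj ⟶ Y.obj)
    (f' : Z.obj ⟶ Y.obj) (g' : Y.obj ⟶ Z.obj) :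
    homMk f g ≫ homMk f' g' = homMk (f' ≫ f) (g ≫ g') := rfl

lemma hom_induction {X Y : EnvelopingCategory k C} {motive : (X ⟶ Y) → Prop}
    (zero : motive 0) (homMk : ∀ f g, motive (homMk f g))
    (add : ∀ s t, motive s → motive t → motive (s + t)) (t : X ⟶ Y) : motive t :=
  TensorProduct.induction_on t zero homMk add

lemma memAdd {x y : C} (h : MemAdd x y) : MemAdd (C := EnvelopingCategory k C) ⟨x⟩ ⟨y⟩ := by
  obtain ⟨n, p, q, hpq⟩ := h
  refine .of_sum_comp_eq_id (fun i : Fin n × Fin n => homMk (q i.1) (p i.2))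
    (fun i => homMk (p i.1) (q i.2)) ?_
  change ∑ i : Fin n × Fin n, (p i.1 ≫ q i.1) ⊗ₜ[k] (p i.2 ≫ q i.2) = 𝟙 y ⊗ₜ[k] 𝟙 y
  simp only [Fintype.sum_prod_type, ← TensorProduct.tmul_sum, ← TensorProduct.sum_tmul, hpq]

/-- The action `h ↦ f ≫ h ≫ g` of `f ⊗ g : X ⟶ Y` on endomorphisms. -/
noncomputable def sandwich (X Y : EnvelopingCategory k C) :
    (X ⟶ Y) →+ (X.obj ⟶ X.obj) →ₗ[k] (Y.obj ⟶ Y.obj) :=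
  (TensorProduct.lift (LinearMap.mk₂ k
    (fun (f : Y.obj ⟶ X.obj) (g : X.obj ⟶ Y.obj) =>
      Linear.leftComp k Y.obj f ∘ₗ Linear.rightComp k X.obj g)
    (by intros; ext; simp) (by intros; ext; simp) (by intros; ext; simp)
    (by intros; ext; simp))).toAddMonoidHom

lemma sandwich_homMk {X Y : EnvelopingCategory k C} (f : Y.obj ⟶ X.obj) (g : X.obj ⟶ Y.obj)
    (h : X.obj ⟶ X.obj) : sandwich X Y (homMk f g) h = f ≫ h ≫ g := rfl

lemma sandwich_comp {X Y Z : EnvelopingCategory k C} (s : X ⟶ Y) (t : Y ⟶ Z) :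
    sandwich X Z (s ≫ t) = sandwich Y Z t ∘ₗ sandwich X Y s := by
  induction s using hom_induction with
  | zero => rw [Limits.zero_comp, map_zero, map_zero, LinearMap.comp_zero]
  | add s s' hs hs' => rw [Preadditive.add_comp, map_add, map_add, hs, hs', LinearMap.comp_add]
  | homMk f g =>
    induction t using hom_induction with
    | zero => rw [Limits.comp_zero, map_zero, map_zero, LinearMap.zero_comp]
    | add t t' ht ht' => rw [Preadditive.comp_add, map_add, map_add, ht, ht', LinearMap.add_comp]
    | homMk f' g' =>
      ext h
      simp only [homMk_comp_homMk, LinearMap.comp_apply, sandwich_homMk, Category.assoc]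

variable (k C) in
/-- The regular bimodule of `C`, as the functor `x ↦ C(x, x)` on the enveloping category. It is the
diagonal of the Hom bifunctor. -/
noncomputable def endFunctor : EnvelopingCategory k C ⥤+ AddCommGrpCat.{v} where
  obj :=
    { obj X := .of (X.obj ⟶ X.obj)
      map t := AddCommGrpCat.ofHom (sandwich _ _ t).toAddMonoidHom
      map_id X := by
        ext h
        exact (Category.id_comp _).trans (Category.comp_id h)
      map_comp s t := by
        ext h
        exact congr($(sandwich_comp s t) h) }
  property :=
    { map_add {X Y s t} := by
        ext h
        exact congr($(map_add (sandwich X Y) s t) h) }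

variable {A : Type u₁} [Ring A] [Algebra k A] {x : C}

variable (φ : Aᵐᵒᵖ ≃ₐ[k] End x)

/-- The additive part of `envelopingRingEquivEnd`: `a ⊗ b ↦ φ (op a) ⊗ φ b`. -/
noncomputable def envelopingAddEquivEnd :
    A ⊗[k] Aᵐᵒᵖ ≃+ End (⟨x⟩ : EnvelopingCategory k C) :=
  (TensorProduct.congr (MulOpposite.opLinearEquiv k ≪≫ₗ φ.toLinearEquiv)
    φ.toLinearEquiv).toAddEquiv

lemma envelopingAddEquivEnd_tmul (a : A) (b : Aᵐᵒᵖ) :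
    envelopingAddEquivEnd φ (a ⊗ₜ b) = homMk (φ (.op a)) (φ b) := rfl

lemma envelopingAddEquivEnd_mul (s t : A ⊗[k] Aᵐᵒᵖ) :
    envelopingAddEquivEnd φ (s * t) = envelopingAddEquivEnd φ s * envelopingAddEquivEnd φ t := by
  induction s with
  | zero => simp only [map_zero, zero_mul]
  | add s s' hs hs' => simp only [map_add, add_mul, hs, hs']
  | tmul a b =>
    induction t with
    | zero => simp only [map_zero, mul_zero]
    | add t t' ht ht' => simp only [map_add, mul_add, ht, ht']
    | tmul a' b' =>
      simp only [Algebra.TensorProduct.tmul_mul_tmul, envelopingAddEquivEnd_tmul, End.mul_def,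
        homMk_comp_homMk, MulOpposite.op_mul, map_mul]

/-- The enveloping algebra of `A` is the endomorphism ring, in the enveloping category, of an object
`x` whose endomorphism ring in `C` is `Aᵐᵒᵖ`. -/
noncomputable def envelopingRingEquivEnd :
    A ⊗[k] Aᵐᵒᵖ ≃+* End (⟨x⟩ : EnvelopingCategory k C) :=
  { envelopingAddEquivEnd φ with map_mul' := envelopingAddEquivEnd_mul φ }

/-- Evaluation at an object `x` with `End x ≃ Aᵐᵒᵖ`, as a functor to `A`-`A`-bimodules. -/
noncomputable def bimoduleEvaluation :
    (EnvelopingCategory k C ⥤+ AddCommGrpCat.{v}) ⥤ ModuleCat.{v} (A ⊗[k] Aᵐᵒᵖ) :=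
  evaluationAt ⟨x⟩ ⋙ ModuleCat.restrictScalars (envelopingRingEquivEnd φ).toRingHom

lemma bimoduleEvaluation_isEquivalence (hx : ∀ y, MemAdd x y) :
    (bimoduleEvaluation φ).IsEquivalence := by
  have := evaluationAt_isEquivalence (x := (⟨x⟩ : EnvelopingCategory k C))
    fun y => memAdd (hx y.obj)
  exact Functor.isEquivalence_trans _ _

attribute [local instance] TensorProduct.Algebra.module in
lemma algEquiv_op_smul (t : A ⊗[k] Aᵐᵒᵖ) (a : A) :
    φ (.op (t • a)) = sandwich ⟨x⟩ ⟨x⟩ (envelopingRingEquivEnd φ t) (φ (.op a)) := by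
  induction t with
  | zero =>
    rw [zero_smul (A ⊗[k] Aᵐᵒᵖ) a]
    simp only [MulOpposite.op_zero, map_zero, LinearMap.zero_apply]
  | add s t hs ht =>
    simp only [add_smul, MulOpposite.op_add, map_add, LinearMap.add_apply, hs, ht]
  | tmul b c =>
    change _ = φ (.op b) ≫ φ (.op a) ≫ φ c
    rw [← End.mul_def, ← End.mul_def, ← map_mul, ← map_mul, TensorProduct.Algebra.smul_def]
    simp [mul_assoc]

end EnvelopingCategory

section Periodic

open EnvelopingCategory

variable {k A B : Type} [Field k] [Ring A] [Algebra k A] [Ring B] [Algebra k B]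
  {C : Type u} [Category.{0} C] [Preadditive C] [Linear k C] {x y : C}

/-- Evaluation sends the regular bimodule of `C` to the regular bimodule of `A`. -/
noncomputable def bimoduleEvaluationEndFunctorIso (φ : Aᵐᵒᵖ ≃ₐ[k] End x) :
    (bimoduleEvaluation φ).obj (endFunctor k C) ≅ regularBimodule k A :=
  letI : Module (A ⊗[k] Aᵐᵒᵖ) A := TensorProduct.Algebra.module
  LinearEquiv.toModuleIso (X₂ := (bimoduleEvaluation φ).obj (endFunctor k C))
    { MulOpposite.opAddEquiv.trans φ.toAddEquiv with
      map_smul' := algEquiv_op_smul φ } |>.symm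

lemma IsPeriodicAlgebra.of_memAdd (hA : IsPeriodicAlgebra k A) (φ : Aᵐᵒᵖ ≃ₐ[k] End x)
    (ψ : Bᵐᵒᵖ ≃ₐ[k] End y) (hx : ∀ z, MemAdd x z) (hy : ∀ z, MemAdd y z) :
    IsPeriodicAlgebra k B := by
  let Φ := bimoduleEvaluation φ
  let Ψ := bimoduleEvaluation ψ
  have : Φ.IsEquivalence := bimoduleEvaluation_isEquivalence φ hx
  have : Ψ.IsEquivalence := bimoduleEvaluation_isEquivalence ψ hy
  refine hA.of_equivalence (Φ.asEquivalence.symm.trans Ψ.asEquivalence) ?_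
  calc Ψ.obj (Φ.inv.obj (regularBimodule k A))
    _ ≅ Ψ.obj (Φ.inv.obj (Φ.obj (endFunctor k C))) :=
      (Φ.inv ⋙ Ψ).mapIso (bimoduleEvaluationEndFunctorIso φ).symm
    _ ≅ Ψ.obj (endFunctor k C) := Ψ.mapIso (Φ.asEquivalence.unitIso.symm.app _)
    _ ≅ regularBimodule k B := bimoduleEvaluationEndFunctorIso ψ

end Periodic

/-! ### Endomorphism algebras -/

section EndAlgEquiv

variable (k : Type w) [CommSemiring k] {C : Type u₁} [Category.{v₁} C] [Preadditive C] [Linear k C]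
  {D : Type u₂} [Category.{v₂} D] [Preadditive D] [Linear k D]

/-- Conjugation by an isomorphism, as an isomorphism of endomorphism algebras; the linear version of
`CategoryTheory.Iso.conj`. -/
def isoConjAlgEquiv {X Y : C} (e : X ≅ Y) : End X ≃ₐ[k] End Y :=
  .ofLinearEquiv (Linear.homCongr k e e) ((Category.assoc _ _ _).trans e.conj_id) fun f g =>
    (Category.assoc _ _ _).trans <| (e.conj_comp g f).trans <|
      congr($(Category.assoc _ g _) ≫ $(Category.assoc _ f _)).symm

/-- A fully faithful `k`-linear functor induces isomorphisms of endomorphism algebras. -/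
noncomputable def mapEndAlgEquiv (F : C ⥤ D) [F.Additive] [F.Linear k] [F.Full] [F.Faithful]
    (X : C) : End X ≃ₐ[k] End (F.obj X) :=
  .ofLinearEquiv (.ofBijective (F.mapLinearMap k) ⟨F.map_injective, F.map_surjective⟩)
    (F.map_id X) fun f g => F.map_comp g f

end EndAlgEquiv

/-- The endomorphisms of the regular left module are the right multiplications. -/
def opAlgEquivEnd (k : Type w) [Field k] (A : Type u) [Ring A] [Algebra k A] :
    Aᵐᵒᵖ ≃ₐ[k] End (ModuleCat.of A A) :=
  .ofRingEquiv (f := (RingEquiv.moduleEndSelf A).trans (ModuleCat.endRingEquiv (.of A A)).symm)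
    fun r => ModuleCat.hom_ext <| LinearMap.ext fun a => (Algebra.commutes r a).symm

/-! ### Separators in module categories -/

section Morita

variable {R : Type u} [Ring R]

lemma iSup_range_eq_top_of_isSeparator {g : ModuleCat.{v} R} (hg : IsSeparator g)
    (M : ModuleCat.{v} R) : ⨆ f : g ⟶ M, LinearMap.range f.hom = ⊤ := by
  set T := ⨆ f : g ⟶ M, LinearMap.range f.hom
  have mkQ_eq_zero : ModuleCat.ofHom T.mkQ = 0 := by
    refine (Preadditive.isSeparator_iff g).1 hg _ fun f => ModuleCat.hom_ext ?_
    refine LinearMap.range_le_ker_iff.1 (le_trans ?_ (Submodule.ker_mkQ T).ge)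
    exact le_iSup (fun f : g ⟶ M => LinearMap.range f.hom) f
  rw [← Submodule.ker_mkQ T, LinearMap.ker_eq_top]
  exact congr(($mkQ_eq_zero).hom)

lemma memAdd_of_isSeparator {g M : ModuleCat.{v} R} (hg : IsSeparator g) (e : M ≃ₗ[R] R) :
    MemAdd g M := by
  have : e.symm 1 ∈ ⨆ f : g ⟶ M, LinearMap.range f.hom :=
    iSup_range_eq_top_of_isSeparator hg M ▸ Submodule.mem_top
  obtain ⟨s, hs, hsum⟩ := (Submodule.mem_iSup_iff_exists_finsupp _ _).1 this
  choose y hy using hs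
  refine .of_sum_comp_eq_id (ι := s.support)
    (fun f => ModuleCat.ofHom (LinearMap.toSpanSingleton R g (y f) ∘ₗ e.toLinearMap))
    (fun f => f.1) ?_
  ext z
  calc _
    _ = ∑ f : s.support, e z • s f := by simp [hy]
    _ = e z • e.symm 1 := by
      rw [← Finset.smul_sum, Finset.sum_coe_sort s.support s, ← hsum, Finsupp.sum]
    _ = z := by rw [← map_smul, smul_eq_mul, mul_one, e.symm_apply_apply]

lemma isSeparator_of_linearEquiv {M : ModuleCat.{v} R} (e : M ≃ₗ[R] R) : IsSeparator M := by
  refine (Preadditive.isSeparator_iff M).2 fun {N N'} f hf => ?_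
  ext x
  have hfx := hf (ModuleCat.ofHom (LinearMap.toSpanSingleton R N x ∘ₗ e.toLinearMap))
  simpa using congr(($hfx).hom (e.symm 1))

lemma small_of_memAdd {M N : ModuleCat.{v} R} [Small.{w} M] (h : MemAdd M N) : Small.{w} N := by
  obtain ⟨n, p, q, hpq⟩ := h
  refine small_of_injective (β := Fin n → M) (f := fun x i => (p i).hom x) fun x y hxy => ?_
  have eq_sum (z : N) : z = ∑ i, (q i).hom ((p i).hom z) := by
    simpa [ModuleCat.hom_sum] using congr(($hpq).hom z).symm
  rw [eq_sum x, eq_sum y]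
  exact Finset.sum_congr rfl fun i _ => congr((q i).hom $(congrFun hxy i))

lemma exists_uliftFunctor_obj_iso (M : ModuleCat.{max v w} R) [Small.{v} M] :
    ∃ N : ModuleCat.{v} R, Nonempty ((ModuleCat.uliftFunctor.{w} R).obj N ≅ M) :=
  ⟨.of R (Shrink.{v} M), ⟨(ULift.moduleEquiv ≪≫ₗ Shrink.linearEquiv R M).toModuleIso⟩⟩

instance {k : Type w} [Field k] [Algebra k R] : (ModuleCat.uliftFunctor.{v₁, v} R).Linear k where

variable {k A B : Type} [Field k] [Ring A] [Algebra k A] [Ring B] [Algebra k B]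

/- The object is `F⁻¹ B`, replaced by an isomorphic module in `Type`: it lies in `add A`, hence is
small even if `F` relates categories of large modules. -/
lemma exists_memAdd_and_algEquiv_end (F : ModuleCat.{u} A ⥤ ModuleCat.{v} B) [F.Additive]
    [F.Linear k] [F.IsEquivalence] :
    ∃ Y : ModuleCat.{0} A, MemAdd (.of A A) Y ∧ MemAdd Y (.of A A) ∧
      Nonempty (Bᵐᵒᵖ ≃ₐ[k] End Y) := by
  let UA := ModuleCat.uliftFunctor.{u, 0} A
  let UB := ModuleCat.uliftFunctor.{v, 0} B
  let a : ModuleCat.{u} A := UA.obj (.of A A)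
  let b : ModuleCat.{v} B := UB.obj (.of B B)
  let x : ModuleCat.{u} A := F.inv.obj b
  let ε : F.obj x ≅ b := F.asEquivalence.counitIso.app b
  have ha : IsSeparator a := isSeparator_of_linearEquiv ULift.moduleEquiv
  have hb : IsSeparator b := isSeparator_of_linearEquiv ULift.moduleEquiv
  have hax : MemAdd a x := .of_map F <| .trans
    (memAdd_of_isSeparator (ha.of_equivalence F.asEquivalence) ULift.moduleEquiv) (.of_iso ε.symm)
  have hxa : MemAdd x a :=
    memAdd_of_isSeparator (hb.of_equivalence F.asEquivalence.symm) ULift.moduleEquiv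
  have : Small.{0} a := inferInstanceAs (Small.{0} (ULift.{u} A))
  have : Small.{0} x := small_of_memAdd hax
  obtain ⟨y, ⟨i⟩⟩ := exists_uliftFunctor_obj_iso.{u} x
  refine ⟨y, .of_map UA (hax.trans (.of_iso i.symm)), .of_map UA (.trans (.of_iso i) hxa), ⟨?_⟩⟩
  exact (opAlgEquivEnd k B).trans <| (mapEndAlgEquiv k UB _).trans <|
    (isoConjAlgEquiv k (ε.symm ≪≫ F.mapIso i.symm)).trans (mapEndAlgEquiv k (UA ⋙ F) y).symm

end Morita

lemma isPeriodicAlgebra_iff_of_memAdd {k A B : Type} [Field k] [Ring A] [Algebra k A] [Ring B]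
    [Algebra k B] {C : Type u} [Category.{0} C] [Preadditive C] [Linear k C]
    {x y : C} (hxy : MemAdd x y) (hyx : MemAdd y x) (φ : Aᵐᵒᵖ ≃ₐ[k] End x)
    (ψ : Bᵐᵒᵖ ≃ₐ[k] End y) : IsPeriodicAlgebra k A ↔ IsPeriodicAlgebra k B := by
  let ι := ObjectProperty.ι (MemAdd x)
  let X : ObjectProperty.FullSubcategory (MemAdd x) := ⟨x, .of_iso (.refl x)⟩
  let Y : ObjectProperty.FullSubcategory (MemAdd x) := ⟨y, hxy⟩
  have hX z : MemAdd X z := .of_map ι z.property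
  have hY z : MemAdd Y z := .of_map ι (hyx.trans z.property)
  let φ' := φ.trans (mapEndAlgEquiv k ι X).symm
  let ψ' := ψ.trans (mapEndAlgEquiv k ι Y).symm
  exact ⟨fun h => h.of_memAdd φ' ψ' hX hY, fun h => h.of_memAdd ψ' φ' hY hX⟩

theorem isPeriodicAlgebra_of_moritaEquivalent_general {k A B : Type} [Field k]
    [Ring A] [Algebra k A] [Ring B] [Algebra k B]
    (F : ModuleCat.{u} A ⥤ ModuleCat.{v} B) [F.Additive] [F.IsEquivalence] [F.Linear k] :
    IsPeriodicAlgebra k A ↔ IsPeriodicAlgebra k B := by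
  obtain ⟨y, hAy, hyA, ⟨ψ⟩⟩ := exists_memAdd_and_algEquiv_end (k := k) F
  exact isPeriodicAlgebra_iff_of_memAdd hAy hyA (opAlgEquivEnd k A) ψ

/-- If finite-dimensional `k`-algebras `A` and `B` are Morita equivalent,
i.e. there is a `k`-linear equivalence between their module categories, then `A` is periodic
if and only if `B` is periodic. -/
theorem isPeriodicAlgebra_of_moritaEquivalent (k A B : Type) [Field k]
    [Ring A] [Algebra k A] [Ring B] [Algebra k B]
    [FiniteDimensional k A] [FiniteDimensional k B]
    (h : ∃ (F : ModuleCat A ⥤ ModuleCat B) (hadd : F.Additive),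
      F.IsEquivalence ∧ (letI := hadd; Functor.Linear k F)) :
    IsPeriodicAlgebra k A ↔ IsPeriodicAlgebra k B := by
  obtain ⟨F, _, _, _⟩ := h
  exact isPeriodicAlgebra_of_moritaEquivalent_general F
end
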